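/- An affine supergroup scheme G = SSp A over a field k of characteristic ≠ 2 is unipotent if and only if the associated affine group scheme G_res = Sp Ā is unipotent (i.e. the Hopf superalgebra A is irreducible if and only if the Hopf algebra Ā is irreducible). -/

import Mathlib

/-!
Write `hit ν a = a₁ ν(a₂)` for the action of a functional `ν` on `A`. Irreducibility is equivalent to
conilpotency: every element is killed by all sufficiently long products of operators `hit ν` with
`ν 1 = 0` (`isIrreducible_iff_conil`). Conilpotency clearly passes to quotients, which gives the
implication from `A` to `B`.

For the converse it suffices that every nonzero subcoalgebra of `A` contains `1`
(`isIrreducible_of_one_mem`). A nonzero subcoalgebra contains a nonzero finite-dimensional right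
coideal `V`, and conilpotency of `B` says that the functionals which vanish on `1` and factor through
`π` act nilpotently on `V`. Since `V` is finite-dimensional, only finitely many odd elements matter:
the kernel of `π` may be replaced by the ideal `F` generated by the odd part of a finite-dimensional
graded subcoalgebra `X` (`OddDatum`, `exists_oddDatum`). This ideal is nilpotent, because odd elements
anticommute and `char k ≠ 2`.

Averaging with the antipode shows that `F` has, modulo `F²`, generators `w i` which are coinvariant
modulo `F`; dually there are odd functionals `ξ i` which vanish on `F·A⁺` (`OddDatum.Coords`). The
left-handed actions `a ↦ ξ i(a₁) a₂` are odd derivations up to higher filtration (`coh_w_mul`), so they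
detect the powers of `F` (`mem_Fp_succ`). On vectors killed by all functionals vanishing on `k·1 + F`, the
functionals vanishing on `k·1 + F²` act as combinations of the `ξ i`, and these actions anticommute
(`hit_anticomm`). As `char k ≠ 2` they square to zero, so a descent along a chain of sets of
functionals produces a nonzero vector of `V` killed by all functionals vanishing on `k·1 + F²`
(`level_ne_bot_of_succ`). Since the `ξ i` detect the filtration and `F` is nilpotent, such a vector is
a multiple of `1` (`Coords.eq_smul_one`), hence `1 ∈ V`.
-/

open TensorProduct CategoryTheory

noncomputable section

/-- A Hopf superalgebra over a field `k` (with `char k ≠ 2`), presented as an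
algebra together with even/odd projection operators encoding the `ℤ₂`-grading,
and comultiplication, counit and antipode satisfying the axioms of a
Hopf-algebra object in the symmetric tensor category of super-vector spaces
(the Koszul sign rule being encoded via the odd projections; this encoding is
faithful since `char k ≠ 2`). -/
structure HopfSuperalgebra (k : Type) [Field k] : Type 1 where
  carrier : Type
  [ring : Ring carrier]
  [alg : Algebra k carrier]
  /-- the projection onto the even part -/
  pe : carrier →ₗ[k] carrier
  /-- the projection onto the odd part -/
  po : carrier →ₗ[k] carrier
  pe_add_po : ∀ a, pe a + po a = a
  pe_po : ∀ a, pe (po a) = 0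
  po_pe : ∀ a, po (pe a) = 0
  mul_even_even : ∀ a b, po a = 0 → po b = 0 → po (a * b) = 0
  mul_even_odd : ∀ a b, po a = 0 → pe b = 0 → pe (a * b) = 0
  mul_odd_even : ∀ a b, pe a = 0 → po b = 0 → pe (a * b) = 0
  mul_odd_odd : ∀ a b, pe a = 0 → pe b = 0 → po (a * b) = 0
  one_even : po 1 = 0
  comul : carrier →ₗ[k] carrier ⊗[k] carrier
  counit : carrier →ₗ[k] k
  antipode : carrier →ₗ[k] carrier
  comul_even : ∀ a, po a = 0 →
    comul a = TensorProduct.map pe pe (comul a) + TensorProduct.map po po (comul a)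
  comul_odd : ∀ a, pe a = 0 →
    comul a = TensorProduct.map pe po (comul a) + TensorProduct.map po pe (comul a)
  counit_odd : ∀ a, pe a = 0 → counit a = 0
  antipode_pe : ∀ a, antipode (pe a) = pe (antipode a)
  coassoc : ∀ a, (TensorProduct.assoc k carrier carrier carrier)
      ((TensorProduct.map comul LinearMap.id) (comul a)) =
      (TensorProduct.map LinearMap.id comul) (comul a)
  counit_comul : ∀ a,
    (TensorProduct.lid k carrier) ((TensorProduct.map counit LinearMap.id) (comul a)) = a
  comul_counit : ∀ a,
    (TensorProduct.rid k carrier) ((TensorProduct.map LinearMap.id counit) (comul a)) = a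
  comul_one : comul 1 = 1 ⊗ₜ[k] 1
  /-- `Δ` is an algebra map for the super (sign-twisted) multiplication of
  `A ⊗ A`: since `(a⊗b)·(c⊗d) = (-1)^{|b||c|} ac ⊗ bd`, the sign twist amounts
  to the correction term `-2·((1⊗po)Δa)·((po⊗1)Δb)`. -/
  comul_mul : ∀ a b, comul (a * b) =
      comul a * comul b -
        (2 : k) • ((TensorProduct.map LinearMap.id po) (comul a) *
          (TensorProduct.map po LinearMap.id) (comul b))
  counit_one : counit 1 = 1
  counit_mul : ∀ a b, counit (a * b) = counit a * counit b
  antipode_comul : ∀ a, (LinearMap.mul' k carrier)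
      ((TensorProduct.map antipode LinearMap.id) (comul a)) = algebraMap k carrier (counit a)
  comul_antipode : ∀ a, (LinearMap.mul' k carrier)
      ((TensorProduct.map LinearMap.id antipode) (comul a)) = algebraMap k carrier (counit a)

attribute [instance] HopfSuperalgebra.ring HopfSuperalgebra.alg

namespace HopfSuperalgebra

variable {k : Type} [Field k] (H : HopfSuperalgebra k)

/-- super-commutativity: even elements are central, odd elements anticommute. -/
def IsSuperCommutative : Prop :=
  (∀ a b : H.carrier, H.po a = 0 → a * b = b * a) ∧
  (∀ a b : H.carrier, H.pe a = 0 → H.pe b = 0 → a * b = -(b * a))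

/-- the super-symmetry `c(v ⊗ w) = (-1)^{|v||w|} w ⊗ v` on `H ⊗ H`. -/
def superSwap : H.carrier ⊗[k] H.carrier →ₗ[k] H.carrier ⊗[k] H.carrier :=
  (TensorProduct.comm k H.carrier H.carrier).toLinearMap ∘ₗ
    (LinearMap.id - (2 : k) • TensorProduct.map H.po H.po)

def IsSuperCocommutative : Prop := ∀ a, H.superSwap (H.comul a) = H.comul a

/-- the primitive elements `{u | Δu = 1⊗u + u⊗1}`. -/
def primitives : Submodule k H.carrier :=
  LinearMap.ker (H.comul -
    ((TensorProduct.mk k H.carrier H.carrier) 1 +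
      (TensorProduct.mk k H.carrier H.carrier).flip 1))

def IsPurelyEven : Prop := ∀ a, H.po a = 0

/-- the convolution product of two linear functionals on `H`. -/
def conv (f g : H.carrier →ₗ[k] k) : H.carrier →ₗ[k] k :=
  LinearMap.mul' k k ∘ₗ TensorProduct.map f g ∘ₗ H.comul

/-- the largest purely even subcoalgebra `H̲ = Δ⁻¹(H₀ ⊗ H₀)`. -/
def underline : Submodule k H.carrier :=
  Submodule.comap H.comul (LinearMap.range
    (TensorProduct.map (LinearMap.ker H.po).subtype (LinearMap.ker H.po).subtype))

/-- the odd primitives `V_H = P(H)₁`. -/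
def oddPrimitives : Submodule k H.carrier := H.primitives ⊓ LinearMap.ker H.pe

end HopfSuperalgebra

/-- A subspace `D` of a coalgebra with comultiplication `Δ` is a subcoalgebra
if `Δ(D) ⊆ D ⊗ D`. -/
def IsSubcoalgebraOf {k M : Type} [Field k] [AddCommGroup M] [Module k M]
    (Δ : M →ₗ[k] M ⊗[k] M) (D : Submodule k M) : Prop :=
  ∀ a ∈ D, Δ a ∈ LinearMap.range (TensorProduct.map D.subtype D.subtype)

/-- The coradical of a coalgebra: the sum of all its simple subcoalgebras. -/
def coradicalOf {k M : Type} [Field k] [AddCommGroup M] [Module k M]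
    (Δ : M →ₗ[k] M ⊗[k] M) : Submodule k M :=
  sSup {D | IsSubcoalgebraOf Δ D ∧ D ≠ ⊥ ∧
    ∀ E : Submodule k M, E ≤ D → IsSubcoalgebraOf Δ E → E = ⊥ ∨ E = D}

namespace HopfSuperalgebra

variable {k : Type} [Field k] (H : HopfSuperalgebra k)

/-- a Hopf superalgebra is irreducible if its coradical is `k·1`. -/
def IsIrreducible : Prop := coradicalOf H.comul = Submodule.span k {(1 : H.carrier)}

/-- cosemisimplicity: the coradical is everything; equivalently all
super-comodules are semisimple, i.e. `SSp H` is linearly reductive. -/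
def IsCosemisimple : Prop := coradicalOf H.comul = (⊤ : Submodule k H.carrier)

/-- connectedness of `Spec A₀`: the only even idempotents are `0` and `1`. -/
def IsConnected : Prop :=
  ∀ a : H.carrier, H.po a = 0 → a * a = a → a = 0 ∨ a = 1

/-- Morphisms of Hopf superalgebras. -/
@[ext]
structure Hom (H K : HopfSuperalgebra k) : Type where
  toLinearMap : H.carrier →ₗ[k] K.carrier
  map_one' : toLinearMap 1 = 1
  map_mul' : ∀ a b, toLinearMap (a * b) = toLinearMap a * toLinearMap b
  map_pe' : ∀ a, toLinearMap (H.pe a) = K.pe (toLinearMap a)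
  map_comul' : ∀ a, K.comul (toLinearMap a) =
    TensorProduct.map toLinearMap toLinearMap (H.comul a)
  map_counit' : ∀ a, K.counit (toLinearMap a) = H.counit a

instance : Category (HopfSuperalgebra k) where
  Hom A B := Hom A B
  id A :=
    { toLinearMap := LinearMap.id
      map_one' := rfl
      map_mul' := fun _ _ => rfl
      map_pe' := fun _ => rfl
      map_comul' := fun a => by simp
      map_counit' := fun _ => rfl }
  comp {X Y Z} f g :=
    { toLinearMap := g.toLinearMap ∘ₗ f.toLinearMap
      map_one' := by simp [f.map_one', g.map_one']
      map_mul' := fun a b => by simp [f.map_mul', g.map_mul']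
      map_pe' := fun a => by simp [f.map_pe', g.map_pe']
      map_comul' := fun a => by
        simp only [LinearMap.coe_comp, Function.comp_apply, g.map_comul', f.map_comul',
          TensorProduct.map_comp, LinearMap.comp_apply]
      map_counit' := fun a => by simp [f.map_counit', g.map_counit'] }
  id_comp f := by apply Hom.ext; rfl
  comp_id f := by apply Hom.ext; rfl
  assoc f g h := by apply Hom.ext; rfl

end HopfSuperalgebra

namespace HopfSuperalgebra

variable {k : Type} [Field k] (H : HopfSuperalgebra k)

/-! ### The two actions of the dual algebra -/

/-- `id ⊗ α : H ⊗ H → H`. -/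
def evR (α : H.carrier →ₗ[k] k) : H.carrier ⊗[k] H.carrier →ₗ[k] H.carrier :=
  (TensorProduct.rid k H.carrier).toLinearMap ∘ₗ TensorProduct.map LinearMap.id α

/-- `α ⊗ id : H ⊗ H → H`. -/
def evL (α : H.carrier →ₗ[k] k) : H.carrier ⊗[k] H.carrier →ₗ[k] H.carrier :=
  (TensorProduct.lid k H.carrier).toLinearMap ∘ₗ TensorProduct.map α LinearMap.id

/-- The action `a ↦ a₁ α(a₂)` of a functional `α` on `H`; the subspaces stable under all
`H.hit α` are the right coideals. -/
def hit (α : H.carrier →ₗ[k] k) : H.carrier →ₗ[k] H.carrier := H.evR α ∘ₗ H.comul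

/-- The action `a ↦ α(a₁) a₂` of a functional `α` on `H`. -/
def coh (α : H.carrier →ₗ[k] k) : H.carrier →ₗ[k] H.carrier := H.evL α ∘ₗ H.comul

@[simp] lemma evR_tmul (α : H.carrier →ₗ[k] k) (a b : H.carrier) :
    H.evR α (a ⊗ₜ b) = α b • a := by simp [evR]

@[simp] lemma evL_tmul (α : H.carrier →ₗ[k] k) (a b : H.carrier) :
    H.evL α (a ⊗ₜ b) = α a • b := by simp [evL]

/-- Coassociativity evaluated against a linear map out of the triple tensor product. -/
lemma coassoc_apply {M : Type} [AddCommGroup M] [Module k M]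
    (G : H.carrier ⊗[k] (H.carrier ⊗[k] H.carrier) →ₗ[k] M) (a : H.carrier) :
    G ((TensorProduct.assoc k _ _ _) ((TensorProduct.map H.comul LinearMap.id) (H.comul a))) =
      G ((TensorProduct.map LinearMap.id H.comul) (H.comul a)) := by
  rw [H.coassoc]

lemma hit_hit (α β : H.carrier →ₗ[k] k) (a : H.carrier) :
    H.hit α (H.hit β a) = H.hit (α ∘ₗ H.hit β) a := by
  set G : H.carrier ⊗[k] (H.carrier ⊗[k] H.carrier) →ₗ[k] H.carrier :=
    (TensorProduct.rid k H.carrier).toLinearMap ∘ₗ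
      TensorProduct.map LinearMap.id (α ∘ₗ H.evR β) with hG
  have h1 : ∀ t : H.carrier ⊗[k] H.carrier, H.hit α (H.evR β t) =
      G ((TensorProduct.assoc k _ _ _) ((TensorProduct.map H.comul LinearMap.id) t)) := by
    intro t
    induction t with
    | zero => simp
    | add x y hx hy => simp [hx, hy]
    | tmul p q =>
      simp only [evR_tmul, hit, LinearMap.map_smul, LinearMap.comp_apply, TensorProduct.map_tmul,
        LinearMap.id_apply]
      induction H.comul p with
      | zero => simp
      | add x y hx hy => simp only [map_add, smul_add, hx, hy, TensorProduct.add_tmul]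
      | tmul x y => simp [hG, smul_smul]
  have h2 := h1 (H.comul a)
  rw [coassoc_apply] at h2
  rw [show H.hit β a = H.evR β (H.comul a) from rfl, h2, hG]
  simp only [LinearMap.comp_apply, hit]
  induction H.comul a with
  | zero => simp
  | add x y hx hy => simp only [map_add, hx, hy]
  | tmul x y => simp

lemma coh_coh (α β : H.carrier →ₗ[k] k) (a : H.carrier) :
    H.coh β (H.coh α a) = H.coh (β ∘ₗ H.coh α) a := by
  set G : H.carrier ⊗[k] (H.carrier ⊗[k] H.carrier) →ₗ[k] H.carrier :=
    (TensorProduct.lid k H.carrier).toLinearMap ∘ₗ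
      TensorProduct.map α (H.evL β) with hG
  have h1 : ∀ t : H.carrier ⊗[k] H.carrier, H.evL (β ∘ₗ H.coh α) t =
      G ((TensorProduct.assoc k _ _ _) ((TensorProduct.map H.comul LinearMap.id) t)) := by
    intro t
    induction t with
    | zero => simp
    | add x y hx hy => simp [hx, hy]
    | tmul p q =>
      simp only [evL_tmul, coh, LinearMap.comp_apply, TensorProduct.map_tmul,
        LinearMap.id_apply]
      induction H.comul p with
      | zero => simp
      | add x y hx hy => simp only [map_add, add_smul, hx, hy, TensorProduct.add_tmul]
      | tmul x y => simp [hG, smul_smul, mul_comm]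
  have h2 := h1 (H.comul a)
  rw [coassoc_apply] at h2
  rw [show H.coh (β ∘ₗ H.coh α) a = H.evL (β ∘ₗ H.coh α) (H.comul a) from rfl, h2, hG]
  simp only [coh]
  simp only [LinearMap.comp_apply]
  induction H.comul a with
  | zero => simp
  | add x y hx hy => simp only [map_add, hx, hy]
  | tmul x y => simp

/-- The two actions are adjoint to one another. -/
lemma apply_hit (α β : H.carrier →ₗ[k] k) (a : H.carrier) :
    α (H.hit β a) = β (H.coh α a) := by
  simp only [hit, coh, LinearMap.comp_apply]
  induction H.comul a with
  | zero => simp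
  | add x y hx hy => simp only [map_add, hx, hy]
  | tmul x y => simp [mul_comm]

lemma comp_hit (α β : H.carrier →ₗ[k] k) : α ∘ₗ H.hit β = β ∘ₗ H.coh α :=
  LinearMap.ext (H.apply_hit α β)

@[simp] lemma hit_counit (a : H.carrier) : H.hit H.counit a = a := H.comul_counit a

@[simp] lemma coh_counit (a : H.carrier) : H.coh H.counit a = a := H.counit_comul a

@[simp] lemma counit_hit (α : H.carrier →ₗ[k] k) (a : H.carrier) :
    H.counit (H.hit α a) = α a := by rw [apply_hit, coh_counit]

@[simp] lemma counit_coh (α : H.carrier →ₗ[k] k) (a : H.carrier) :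
    H.counit (H.coh α a) = α a := by rw [← apply_hit, hit_counit]

@[simp] lemma hit_one (α : H.carrier →ₗ[k] k) : H.hit α 1 = α 1 • (1 : H.carrier) := by
  simp [hit, H.comul_one]

@[simp] lemma coh_one (α : H.carrier →ₗ[k] k) : H.coh α 1 = α 1 • (1 : H.carrier) := by
  simp [coh, H.comul_one]

lemma one_ne_zero' : (1 : H.carrier) ≠ 0 := by
  intro h
  have := H.counit_one
  rw [h, map_zero] at this
  exact zero_ne_one this

lemma exists_dual_ne {M : Type} [AddCommGroup M] [Module k M] {a : M} (h : a ≠ 0) :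
    ∃ ψ : M →ₗ[k] k, ψ a ≠ 0 := by
  by_contra! hc
  exact h ((Module.forall_dual_apply_eq_zero_iff k a).1 hc)

lemma dual_ext {M : Type} [AddCommGroup M] [Module k M] {a b : M}
    (h : ∀ ψ : M →ₗ[k] k, ψ a = ψ b) : a = b := by
  rw [← sub_eq_zero]
  refine (Module.forall_dual_apply_eq_zero_iff k _).1 fun ψ => ?_
  rw [map_sub, h, sub_self]

/-- A functional vanishing on a subspace and not at a given point outside it. -/
lemma exists_dual_ann {M : Type} [AddCommGroup M] [Module k M] {K : Submodule k M} {a : M}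
    (h : a ∉ K) : ∃ ψ : M →ₗ[k] k, ψ a ≠ 0 ∧ ∀ x ∈ K, ψ x = 0 := by
  obtain ⟨f, hf, hK⟩ := Submodule.exists_dual_map_eq_bot_of_notMem h inferInstance
  refine ⟨f, hf, fun x hx => ?_⟩
  have : f x ∈ K.map f := ⟨x, hx, rfl⟩
  rw [hK] at this
  simpa using this

lemma hit_coh (α β : H.carrier →ₗ[k] k) (a : H.carrier) :
    H.hit α (H.coh β a) = H.coh β (H.hit α a) := by
  refine dual_ext (k := k) fun ψ => ?_
  rw [apply_hit, coh_coh, ← apply_hit, LinearMap.comp_apply]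

@[simp] lemma hit_zero (a : H.carrier) : H.hit 0 a = 0 := by
  simp [hit, evR]

lemma hit_add (α β : H.carrier →ₗ[k] k) (a : H.carrier) :
    H.hit (α + β) a = H.hit α a + H.hit β a := by
  simp [hit, evR, TensorProduct.map_add_right]

lemma hit_sub (α β : H.carrier →ₗ[k] k) (a : H.carrier) :
    H.hit (α - β) a = H.hit α a - H.hit β a := by
  rw [eq_sub_iff_add_eq, ← hit_add, sub_add_cancel]

lemma hit_smul (c : k) (β : H.carrier →ₗ[k] k) (a : H.carrier) :
    H.hit (c • β) a = c • H.hit β a := by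
  simp [hit, evR, TensorProduct.map_smul_right]

lemma coh_add (α β : H.carrier →ₗ[k] k) (a : H.carrier) :
    H.coh (α + β) a = H.coh α a + H.coh β a := by
  simp [coh, evL, TensorProduct.map_add_left]

lemma coh_smul (c : k) (β : H.carrier →ₗ[k] k) (a : H.carrier) :
    H.coh (c • β) a = c • H.coh β a := by
  simp [coh, evL, TensorProduct.map_smul_left]

lemma coh_sub (α β : H.carrier →ₗ[k] k) (a : H.carrier) :
    H.coh (α - β) a = H.coh α a - H.coh β a := by
  rw [eq_sub_iff_add_eq, ← coh_add, sub_add_cancel]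

/-- If all slices `(id ⊗ β) u` are fixed by `pr`, then `u` is fixed by `pr ⊗ id`. -/
lemma map_left_eq_of_slice {M N : Type} [AddCommGroup M] [Module k M] [AddCommGroup N]
    [Module k N] (pr : M →ₗ[k] M) (u : M ⊗[k] N)
    (h : ∀ β : N →ₗ[k] k, pr (TensorProduct.rid k M (TensorProduct.map LinearMap.id β u)) =
      TensorProduct.rid k M (TensorProduct.map LinearMap.id β u)) :
    TensorProduct.map pr (LinearMap.id : N →ₗ[k] N) u = u := by
  classical
  let b := Module.Basis.ofVectorSpace k N
  apply (TensorProduct.equivFinsuppOfBasisRight b).injective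
  ext i
  have key : ∀ t : M ⊗[k] N, TensorProduct.equivFinsuppOfBasisRight b t i =
      TensorProduct.rid k M (TensorProduct.map LinearMap.id (b.coord i) t) := by
    intro t
    induction t with
    | zero => simp
    | add x y hx hy => simp [hx, hy]
    | tmul x y => simp
  rw [key, key]
  have h3 : ∀ t : M ⊗[k] N,
      TensorProduct.rid k M (TensorProduct.map LinearMap.id (b.coord i)
        (TensorProduct.map pr LinearMap.id t)) =
      pr (TensorProduct.rid k M (TensorProduct.map LinearMap.id (b.coord i) t)) := by
    intro t
    induction t with
    | zero => simp
    | add x y hx hy => simp only [map_add, hx, hy]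
    | tmul x y => simp
  rw [h3, h]

lemma map_right_eq_of_slice {M N : Type} [AddCommGroup M] [Module k M] [AddCommGroup N]
    [Module k N] (pr : N →ₗ[k] N) (u : M ⊗[k] N)
    (h : ∀ β : M →ₗ[k] k, pr (TensorProduct.lid k N (TensorProduct.map β LinearMap.id u)) =
      TensorProduct.lid k N (TensorProduct.map β LinearMap.id u)) :
    TensorProduct.map (LinearMap.id : M →ₗ[k] M) pr u = u := by
  have key : ∀ (β : M →ₗ[k] k) (t : M ⊗[k] N),
      TensorProduct.rid k N (TensorProduct.map LinearMap.id β (TensorProduct.comm k M N t)) =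
      TensorProduct.lid k N (TensorProduct.map β LinearMap.id t) := by
    intro β t
    induction t with
    | zero => simp
    | add x y hx hy => simp [hx, hy]
    | tmul x y => simp
  have := map_left_eq_of_slice pr (TensorProduct.comm k M N u)
    (fun β => by rw [key]; exact h β)
  rw [TensorProduct.map_comm] at this
  exact (TensorProduct.comm k M N).injective this

/-- A projection onto a subspace, as an endomorphism. -/
lemma exists_proj {M : Type} [AddCommGroup M] [Module k M] (K : Submodule k M) :
    ∃ (pr : M →ₗ[k] K), ∀ x ∈ K, (pr x : M) = x := by
  obtain ⟨p, hp⟩ := Submodule.exists_isCompl K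
  exact ⟨K.projectionOnto p hp, fun x hx =>
    congrArg Subtype.val (Submodule.projectionOnto_apply_left hp ⟨x, hx⟩)⟩

/-- A tensor all of whose left slices lie in `K` and all of whose right slices lie in `L`
belongs to `K ⊗ L`; this is the identity `(K ⊗ N) ∩ (M ⊗ L) = K ⊗ L`. -/
lemma mem_range_of_slices {M N : Type} [AddCommGroup M] [Module k M] [AddCommGroup N]
    [Module k N] (K : Submodule k M) (L : Submodule k N) (u : M ⊗[k] N)
    (hK : ∀ β : N →ₗ[k] k, TensorProduct.rid k M (TensorProduct.map LinearMap.id β u) ∈ K)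
    (hL : ∀ α : M →ₗ[k] k, TensorProduct.lid k N (TensorProduct.map α LinearMap.id u) ∈ L) :
    u ∈ LinearMap.range (TensorProduct.map K.subtype L.subtype) := by
  obtain ⟨p, hp⟩ := exists_proj K
  obtain ⟨q, hq⟩ := exists_proj L
  have h1 := map_left_eq_of_slice (K.subtype ∘ₗ p) u (fun β => hp _ (hK β))
  have h2 := map_right_eq_of_slice (L.subtype ∘ₗ q) u (fun α => hq _ (hL α))
  refine ⟨TensorProduct.map p q u, ?_⟩
  conv_rhs => rw [← h2, ← h1]
  simp only [← LinearMap.comp_apply, ← TensorProduct.map_comp]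
  rfl

/-- A tensor all of whose slices `(id ⊗ β) u` lie in `K` lies in `K ⊗ A`. -/
lemma mem_range_of_slice_left {M N : Type} [AddCommGroup M] [Module k M] [AddCommGroup N]
    [Module k N] (K : Submodule k M) (u : M ⊗[k] N)
    (h : ∀ β : N →ₗ[k] k, TensorProduct.rid k M (TensorProduct.map LinearMap.id β u) ∈ K) :
    u ∈ LinearMap.range (TensorProduct.map K.subtype (LinearMap.id : N →ₗ[k] N)) := by
  obtain ⟨p, hp⟩ := exists_proj K
  have h1 := map_left_eq_of_slice (K.subtype ∘ₗ p) u (fun β => hp _ (h β))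
  refine ⟨TensorProduct.map p LinearMap.id u, ?_⟩
  conv_rhs => rw [← h1]
  simp only [← LinearMap.comp_apply, ← TensorProduct.map_comp]
  rfl

/-- A tensor all of whose slices `(α ⊗ id) u` lie in `L` lies in `A ⊗ L`. -/
lemma mem_range_of_slice_right {M N : Type} [AddCommGroup M] [Module k M] [AddCommGroup N]
    [Module k N] (L : Submodule k N) (u : M ⊗[k] N)
    (h : ∀ α : M →ₗ[k] k, TensorProduct.lid k N (TensorProduct.map α LinearMap.id u) ∈ L) :
    u ∈ LinearMap.range (TensorProduct.map (LinearMap.id : M →ₗ[k] M) L.subtype) := by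
  obtain ⟨q, hq⟩ := exists_proj L
  have h1 := map_right_eq_of_slice (L.subtype ∘ₗ q) u (fun β => hq _ (h β))
  refine ⟨TensorProduct.map LinearMap.id q u, ?_⟩
  conv_rhs => rw [← h1]
  simp only [← LinearMap.comp_apply, ← TensorProduct.map_comp]
  rfl

/-! ### Finiteness and subcoalgebras -/

/-- A tensor only involves finite-dimensional spaces of left and right legs. -/
lemma exists_legs (t : H.carrier ⊗[k] H.carrier) :
    ∃ P Q : Submodule k H.carrier, FiniteDimensional k P ∧ FiniteDimensional k Q ∧
      (∀ β, H.evR β t ∈ P) ∧ (∀ β, H.evL β t ∈ Q) ∧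
      (∀ β, (∀ x ∈ Q, β x = 0) → H.evR β t = 0) ∧
      (∀ β, (∀ x ∈ P, β x = 0) → H.evL β t = 0) := by
  induction t with
  | zero => exact ⟨⊥, ⊥, inferInstance, inferInstance, by simp, by simp, by simp, by simp⟩
  | add x y hx hy =>
    obtain ⟨P, Q, h1, h2, h3, h4, h5, h6⟩ := hx
    obtain ⟨P', Q', h1', h2', h3', h4', h5', h6'⟩ := hy
    refine ⟨P ⊔ P', Q ⊔ Q', inferInstance, inferInstance, fun β => ?_, fun β => ?_,
      fun β hβ => ?_, fun β hβ => ?_⟩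
    · rw [map_add]
      exact add_mem (Submodule.mem_sup_left (h3 β)) (Submodule.mem_sup_right (h3' β))
    · rw [map_add]
      exact add_mem (Submodule.mem_sup_left (h4 β)) (Submodule.mem_sup_right (h4' β))
    · rw [map_add, h5 β fun x hx => hβ x (Submodule.mem_sup_left hx),
        h5' β fun x hx => hβ x (Submodule.mem_sup_right hx), add_zero]
    · rw [map_add, h6 β fun x hx => hβ x (Submodule.mem_sup_left hx),
        h6' β fun x hx => hβ x (Submodule.mem_sup_right hx), add_zero]
  | tmul x y =>
    refine ⟨k ∙ x, k ∙ y, inferInstance, inferInstance, fun β => ?_, fun β => ?_,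
      fun β hβ => ?_, fun β hβ => ?_⟩
    · rw [evR_tmul]; exact Submodule.smul_mem _ _ (Submodule.mem_span_singleton_self x)
    · rw [evL_tmul]; exact Submodule.smul_mem _ _ (Submodule.mem_span_singleton_self y)
    · rw [evR_tmul, hβ y (Submodule.mem_span_singleton_self y), zero_smul]
    · rw [evL_tmul, hβ x (Submodule.mem_span_singleton_self x), zero_smul]

/-- The space `{hit β a}` for varying functionals `β`: the right coideal generated by `a`. -/
def hitSpan (a : H.carrier) : Submodule k H.carrier where
  carrier := {x | ∃ β, H.hit β a = x}
  add_mem' := by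
    rintro _ _ ⟨β, rfl⟩ ⟨γ, rfl⟩
    exact ⟨β + γ, H.hit_add _ _ _⟩
  zero_mem' := ⟨0, H.hit_zero a⟩
  smul_mem' := by
    rintro c _ ⟨β, rfl⟩
    exact ⟨c • β, H.hit_smul _ _ _⟩

/-- The space `{coh β a}` for varying functionals `β`. -/
def cohSpan (a : H.carrier) : Submodule k H.carrier where
  carrier := {x | ∃ β, H.coh β a = x}
  add_mem' := by
    rintro _ _ ⟨β, rfl⟩ ⟨γ, rfl⟩
    exact ⟨β + γ, H.coh_add _ _ _⟩
  zero_mem' := ⟨0, by simpa using H.coh_smul 0 0 a⟩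
  smul_mem' := by
    rintro c _ ⟨β, rfl⟩
    exact ⟨c • β, H.coh_smul _ _ _⟩

lemma mem_hitSpan (a : H.carrier) : a ∈ H.hitSpan a := ⟨H.counit, H.hit_counit a⟩

lemma mem_cohSpan (a : H.carrier) : a ∈ H.cohSpan a := ⟨H.counit, H.coh_counit a⟩

instance (a : H.carrier) : FiniteDimensional k (H.hitSpan a) := by
  obtain ⟨P, Q, h1, h2, h3, h4, h5, h6⟩ := H.exists_legs (H.comul a)
  refine Submodule.finiteDimensional_of_le (S₂ := P) ?_
  rintro _ ⟨β, rfl⟩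
  exact h3 β

instance (a : H.carrier) : FiniteDimensional k (H.cohSpan a) := by
  obtain ⟨P, Q, h1, h2, h3, h4, h5, h6⟩ := H.exists_legs (H.comul a)
  refine Submodule.finiteDimensional_of_le (S₂ := Q) ?_
  rintro _ ⟨β, rfl⟩
  exact h4 β

/-- Stability under all `hit β`. -/
def HitStable (V : Submodule k H.carrier) : Prop := ∀ β, ∀ v ∈ V, H.hit β v ∈ V

/-- Stability under all `coh β`. -/
def CohStable (V : Submodule k H.carrier) : Prop := ∀ β, ∀ v ∈ V, H.coh β v ∈ V

lemma hitStable_hitSpan (a : H.carrier) : H.HitStable (H.hitSpan a) := by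
  rintro β _ ⟨γ, rfl⟩
  exact ⟨_, (H.hit_hit β γ a).symm⟩

lemma isSubcoalgebraOf_iff (D : Submodule k H.carrier) :
    IsSubcoalgebraOf H.comul D ↔ H.HitStable D ∧ H.CohStable D := by
  constructor
  · intro h
    constructor
    · intro β a ha
      obtain ⟨t, ht⟩ := h a ha
      rw [hit, LinearMap.comp_apply, ← ht]
      clear ht
      induction t with
      | zero => simp
      | add x y hx hy => rw [map_add, map_add]; exact add_mem hx hy
      | tmul x y => simpa using D.smul_mem _ x.2
    · intro β a ha
      obtain ⟨t, ht⟩ := h a ha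
      rw [coh, LinearMap.comp_apply, ← ht]
      clear ht
      induction t with
      | zero => simp
      | add x y hx hy => rw [map_add, map_add]; exact add_mem hx hy
      | tmul x y => simpa using D.smul_mem _ y.2
  · rintro ⟨h1, h2⟩ a ha
    exact mem_range_of_slices D D _ (fun β => h1 β a ha) (fun β => h2 β a ha)

end HopfSuperalgebra

namespace HopfSuperalgebra

variable {k : Type} [Field k] (H : HopfSuperalgebra k)

lemma mem_of_one_sub {β : H.carrier →ₗ[k] k} : (β - β 1 • H.counit) 1 = 0 := by
  simp [H.counit_one]

/-- A nonzero finite-dimensional space contains a subspace minimal among those with a given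
property. -/
lemma exists_minimal_submodule {M : Type} [AddCommGroup M] [Module k M]
    (P : Submodule k M → Prop) (Z₀ : Submodule k M) [FiniteDimensional k Z₀] (h₀ : P Z₀) :
    ∃ Z ≤ Z₀, P Z ∧ ∀ W ≤ Z, P W → W = Z := by
  classical
  have hex : ∃ n, ∃ Z ≤ Z₀, P Z ∧ Module.finrank k Z = n := ⟨_, Z₀, le_rfl, h₀, rfl⟩
  obtain ⟨Z, hZ, hP, hn⟩ := Nat.find_spec hex
  refine ⟨Z, hZ, hP, fun W hW hPW => ?_⟩
  have : FiniteDimensional k Z := Submodule.finiteDimensional_of_le hZ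
  refine Submodule.eq_of_le_of_finrank_le hW ?_
  rw [hn]
  exact Nat.find_min' hex ⟨W, hW.trans hZ, hPW, rfl⟩

/-- The span of all `coh α v` for `v ∈ V`; for a right coideal `V` it is the subcoalgebra
generated by `V`. -/
def cohHull (V : Submodule k H.carrier) : Submodule k H.carrier :=
  Submodule.span k {x | ∃ α, ∃ v ∈ V, H.coh α v = x}

lemma le_cohHull (V : Submodule k H.carrier) : V ≤ H.cohHull V := fun v hv =>
  Submodule.subset_span ⟨H.counit, v, hv, H.coh_counit v⟩

instance (V : Submodule k H.carrier) [FiniteDimensional k V] :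
    FiniteDimensional k (H.cohHull V) := by
  obtain ⟨s, hs⟩ := (Module.Finite.iff_fg.1 ‹FiniteDimensional k V› : V.FG)
  have hfd : ∀ t : Finset H.carrier, ∃ W : Submodule k H.carrier, FiniteDimensional k W ∧
      ∀ v ∈ t, H.cohSpan v ≤ W := by
    classical
    intro t
    induction t using Finset.induction_on with
    | empty => exact ⟨⊥, inferInstance, by simp⟩
    | insert a t _ ih =>
      obtain ⟨W, hW, h⟩ := ih
      refine ⟨H.cohSpan a ⊔ W, inferInstance, fun v hv => ?_⟩
      rcases Finset.mem_insert.1 hv with rfl | hv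
      · exact le_sup_left
      · exact (h v hv).trans le_sup_right
  obtain ⟨W, hW, h⟩ := hfd s
  refine Submodule.finiteDimensional_of_le (S₂ := W) (Submodule.span_le.2 ?_)
  rintro _ ⟨α, v, hv, rfl⟩
  have : V ≤ W.comap (H.coh α) := by
    rw [← hs, Submodule.span_le]
    exact fun x hx => h x hx ⟨α, rfl⟩
  exact this hv

lemma cohStable_cohHull (V : Submodule k H.carrier) : H.CohStable (H.cohHull V) := by
  intro β v hv
  have : H.cohHull V ≤ (H.cohHull V).comap (H.coh β) := by
    refine Submodule.span_le.2 ?_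
    rintro _ ⟨α, v, hv, rfl⟩
    exact Submodule.subset_span ⟨_, v, hv, (H.coh_coh α β v).symm⟩
  exact this hv

lemma hitStable_cohHull {V : Submodule k H.carrier} (hV : H.HitStable V) :
    H.HitStable (H.cohHull V) := by
  intro β v hv
  have : H.cohHull V ≤ (H.cohHull V).comap (H.hit β) := by
    refine Submodule.span_le.2 ?_
    rintro _ ⟨α, v, hv, rfl⟩
    exact Submodule.subset_span ⟨_, H.hit β v, hV β v hv, (H.hit_coh β α v).symm⟩
  exact this hv

/-! ### Irreducibility as conilpotency -/

/-- The elements killed by any `n` successive actions of functionals from `S`. -/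
def nil (S : Set (H.carrier →ₗ[k] k)) : ℕ → Submodule k H.carrier
  | 0 => ⊥
  | n + 1 => ⨅ ν ∈ S, (nil S n).comap (H.hit ν)

lemma mem_nil_succ {S : Set (H.carrier →ₗ[k] k)} {n : ℕ} {a : H.carrier} :
    a ∈ H.nil S (n + 1) ↔ ∀ ν ∈ S, H.hit ν a ∈ H.nil S n := by
  simp [nil, Submodule.mem_iInf]

lemma nil_le_succ (S : Set (H.carrier →ₗ[k] k)) (n : ℕ) : H.nil S n ≤ H.nil S (n + 1) := by
  induction n with
  | zero => exact bot_le
  | succ n ih => exact fun a ha => H.mem_nil_succ.2 fun ν hν => ih (H.mem_nil_succ.1 ha ν hν)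

lemma nil_mono (S : Set (H.carrier →ₗ[k] k)) : Monotone (H.nil S) :=
  monotone_nat_of_le_succ (H.nil_le_succ S)

lemma fd_le_nil (S : Set (H.carrier →ₗ[k] k)) (W : Submodule k H.carrier)
    [FiniteDimensional k W] (h : ∀ w ∈ W, ∃ n, w ∈ H.nil S n) : ∃ n, W ≤ H.nil S n := by
  obtain ⟨s, hs⟩ := (Module.Finite.iff_fg.1 ‹FiniteDimensional k W› : W.FG)
  have hfd : ∀ t : Finset H.carrier, (∀ x ∈ t, x ∈ W) → ∃ n, ∀ v ∈ t, v ∈ H.nil S n := by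
    classical
    intro t
    induction t using Finset.induction_on with
    | empty => exact fun _ => ⟨0, by simp⟩
    | insert a t _ ih =>
      intro ht
      obtain ⟨n, hn⟩ := ih fun x hx => ht x (Finset.mem_insert_of_mem hx)
      obtain ⟨m, hm⟩ := h a (ht a (Finset.mem_insert_self a t))
      refine ⟨max n m, fun v hv => ?_⟩
      rcases Finset.mem_insert.1 hv with rfl | hv
      · exact H.nil_mono S (le_max_right n m) hm
      · exact H.nil_mono S (le_max_left n m) (hn v hv)
  obtain ⟨n, hn⟩ := hfd s fun x hx => hs ▸ Submodule.subset_span hx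
  exact ⟨n, by rw [← hs, Submodule.span_le]; exact hn⟩

/-- The functionals vanishing at the group-like element `1`. -/
def aug : Set (H.carrier →ₗ[k] k) := {ν | ν 1 = 0}

/-- Conilpotency: the coradical filtration started at `k·1` is exhaustive. -/
def Conil : Prop := ∀ b : H.carrier, ∃ n, b ∈ H.nil H.aug n

lemma hitStable_nil (n : ℕ) : H.HitStable (H.nil H.aug n) := by
  cases n with
  | zero => intro β v hv; rw [nil, Submodule.mem_bot] at hv; simp [hv]
  | succ n =>
    intro β v hv
    rw [mem_nil_succ] at hv ⊢
    intro ν hν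
    rw [hit_hit]
    refine hv _ ?_
    have : ν 1 = 0 := hν
    simp [aug, this]

lemma eq_smul_one {b : H.carrier} (h : ∀ β ∈ H.aug, H.hit β b = 0) :
    b = H.counit b • (1 : H.carrier) := by
  refine dual_ext (k := k) fun β => ?_
  have := h (β - β 1 • H.counit) H.mem_of_one_sub
  rw [hit_sub, hit_smul, hit_counit, sub_eq_zero] at this
  rw [← counit_hit, this, map_smul, map_smul, smul_eq_mul, smul_eq_mul, mul_comm]

lemma isSubcoalgebraOf_span_one : IsSubcoalgebraOf H.comul (k ∙ (1 : H.carrier)) := by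
  rw [isSubcoalgebraOf_iff]
  constructor
  · intro β v hv
    obtain ⟨c, rfl⟩ := Submodule.mem_span_singleton.1 hv
    rw [map_smul, hit_one]
    exact Submodule.smul_mem _ _ (Submodule.smul_mem _ _ (Submodule.mem_span_singleton_self _))
  · intro β v hv
    obtain ⟨c, rfl⟩ := Submodule.mem_span_singleton.1 hv
    rw [map_smul, coh_one]
    exact Submodule.smul_mem _ _ (Submodule.smul_mem _ _ (Submodule.mem_span_singleton_self _))

lemma span_one_ne_bot : (k ∙ (1 : H.carrier)) ≠ ⊥ := by
  rw [Ne, Submodule.span_singleton_eq_bot]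
  exact H.one_ne_zero'

lemma isIrreducible_of_one_mem
    (h : ∀ D : Submodule k H.carrier, IsSubcoalgebraOf H.comul D → D ≠ ⊥ → (1 : H.carrier) ∈ D) :
    H.IsIrreducible := by
  have hle : ∀ D : Submodule k H.carrier, IsSubcoalgebraOf H.comul D → D ≠ ⊥ →
      (k ∙ (1 : H.carrier)) ≤ D := fun D h1 h2 => by
    rw [Submodule.span_singleton_le_iff_mem]; exact h D h1 h2
  apply le_antisymm
  · refine sSup_le ?_
    rintro D ⟨h1, h2, h3⟩
    rcases h3 _ (hle D h1 h2) H.isSubcoalgebraOf_span_one with h4 | h4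
    · exact absurd h4 H.span_one_ne_bot
    · exact h4.ge
  · refine le_sSup ⟨H.isSubcoalgebraOf_span_one, H.span_one_ne_bot, fun E hE hs => ?_⟩
    by_cases h0 : E = ⊥
    · exact Or.inl h0
    · exact Or.inr (le_antisymm hE (hle E hs h0))

lemma Conil.isIrreducible (h : H.Conil) : H.IsIrreducible := by
  refine H.isIrreducible_of_one_mem fun D hD h0 => ?_
  classical
  rw [isSubcoalgebraOf_iff] at hD
  obtain ⟨d, hd, hd0⟩ := (Submodule.ne_bot_iff D).1 h0
  have hex : ∃ n, ∃ b ∈ D, b ≠ 0 ∧ b ∈ H.nil H.aug n := by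
    obtain ⟨n, hn⟩ := h d
    exact ⟨n, d, hd, hd0, hn⟩
  obtain ⟨b, hb, hb0, hbn⟩ := Nat.find_spec hex
  have hmin := fun m => Nat.find_min (m := m) hex
  cases hn : Nat.find hex with
  | zero => rw [hn] at hbn; exact absurd hbn hb0
  | succ n =>
    rw [hn, mem_nil_succ] at hbn
    have hb1 := H.eq_smul_one (b := b) fun β hβ => by
      by_contra hne
      exact hmin n (by omega) ⟨_, hD.1 β b hb, hne, hbn β hβ⟩
    have hc : H.counit b ≠ 0 := fun hc => hb0 (by rw [hb1, hc, zero_smul])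
    rw [hb1] at hb
    exact (Submodule.smul_mem_iff D hc).1 hb

/-- The union of the filtration `nil aug`. -/
def nilInf : Submodule k H.carrier where
  carrier := {b | ∃ n, b ∈ H.nil H.aug n}
  add_mem' := by
    rintro a b ⟨n, hn⟩ ⟨m, hm⟩
    exact ⟨max n m, add_mem (H.nil_mono _ (le_max_left n m) hn)
      (H.nil_mono _ (le_max_right n m) hm)⟩
  zero_mem' := ⟨0, zero_mem _⟩
  smul_mem' := by
    rintro c a ⟨n, hn⟩
    exact ⟨n, Submodule.smul_mem _ _ hn⟩

lemma hitStable_nilInf : H.HitStable H.nilInf := by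
  rintro β v ⟨n, hn⟩
  exact ⟨n, H.hitStable_nil n β v hn⟩

lemma exists_aug_hit_notMem {z : H.carrier} (hz : z ∉ H.nilInf) :
    ∃ β ∈ H.aug, H.hit β z ∉ H.nilInf := by
  by_contra! hc
  obtain ⟨n, hn⟩ := H.fd_le_nil H.aug (H.hitSpan z ⊓ H.nilInf) fun w hw => hw.2
  exact hz ⟨n + 1, H.mem_nil_succ.2 fun ν hν => hn ⟨⟨ν, rfl⟩, hc ν hν⟩⟩

/-- The combinatorial core of `IsIrreducible.conil`: when every `z ∈ Z` outside `nilInf` is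
reproduced by some `δ` with `δ 1 = 0`, no sum of elements `coh φ z` with `φ` vanishing on
`nilInf` equals `1`. -/
lemma sum_coh_ne_one (Z : Submodule k H.carrier) (hZ : H.HitStable Z)
    (hδ : ∀ z ∈ Z, z ∉ H.nilInf → ∃ δ ∈ H.aug, H.hit δ z = z)
    (l : List ((H.carrier →ₗ[k] k) × H.carrier)) :
    (∀ p ∈ l, (∀ x ∈ H.nilInf, p.1 x = 0) ∧ p.2 ∈ Z) →
      (l.map fun p => H.coh p.1 p.2).sum ≠ 1 := by
  induction hl : l.length generalizing l with
  | zero =>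
    rw [List.length_eq_zero_iff] at hl
    subst hl
    intro _ h
    exact H.one_ne_zero' h.symm
  | succ n ih =>
    obtain _ | ⟨⟨φ, z⟩, l⟩ := l
    · simp at hl
    intro hv hsum
    have hln : l.length = n := by simpa using hl
    obtain ⟨hφ, hz⟩ := hv (φ, z) List.mem_cons_self
    have hvl := fun p hp => hv p (List.mem_cons_of_mem _ hp)
    rw [List.map_cons, List.sum_cons] at hsum
    by_cases hzi : z ∈ H.nilInf
    · have h0 : H.coh φ z = 0 := by
        refine dual_ext (k := k) fun ψ => ?_
        rw [← apply_hit, hφ _ (H.hitStable_nilInf ψ z hzi), map_zero]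
      refine ih l hln hvl ?_
      simpa [h0] using hsum
    · obtain ⟨δ, hδ1, hδz⟩ := hδ z hz hzi
      have hδ0 : δ 1 = 0 := hδ1
      have key : ∀ m : List ((H.carrier →ₗ[k] k) × H.carrier),
          ((m.map fun p => (p.1, p.2 - H.hit δ p.2)).map fun p => H.coh p.1 p.2).sum =
          (m.map fun p => H.coh p.1 p.2).sum - H.hit δ (m.map fun p => H.coh p.1 p.2).sum := by
        intro m
        induction m with
        | nil => simp
        | cons p m ihm =>
          simp only [List.map_cons, List.sum_cons, map_add, map_sub, hit_coh] at ihm ⊢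
          rw [ihm]
          abel
      refine ih (l.map fun p => (p.1, p.2 - H.hit δ p.2)) (by simpa using hln) ?_ ?_
      · intro p hp
        obtain ⟨q, hq, rfl⟩ := List.mem_map.1 hp
        exact ⟨(hvl q hq).1, sub_mem (hvl q hq).2 (hZ δ _ (hvl q hq).2)⟩
      · rw [key]
        have h1 := congrArg (H.hit δ) hsum
        rw [map_add, hit_coh, hδz, hit_one, hδ0, zero_smul] at h1
        rw [← hsum, sub_eq_iff_eq_add, eq_neg_of_add_eq_zero_right h1]
        abel

/-- If the coradical is `k·1`, then `H` is conilpotent. -/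
lemma IsIrreducible.conil (h : H.IsIrreducible) : H.Conil := by
  by_contra hc
  have hc' : ∃ b, b ∉ H.nilInf := by
    unfold Conil at hc
    push Not at hc
    obtain ⟨b, hb⟩ := hc
    exact ⟨b, fun ⟨n, hn⟩ => hb n hn⟩
  obtain ⟨b, hb⟩ := hc'
  obtain ⟨Z, hZle, ⟨hZs, hZn⟩, hZmin⟩ := exists_minimal_submodule
    (fun Z => H.HitStable Z ∧ ¬ Z ≤ H.nilInf) (H.hitSpan b)
    ⟨H.hitStable_hitSpan b, fun hle => hb (hle (H.mem_hitSpan b))⟩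
  have : FiniteDimensional k Z := Submodule.finiteDimensional_of_le hZle
  have hgen : ∀ z ∈ Z, z ∉ H.nilInf → H.hitSpan z = Z := by
    intro z hz hzi
    refine hZmin _ ?_ ⟨H.hitStable_hitSpan z, fun hle => hzi (hle (H.mem_hitSpan z))⟩
    rintro _ ⟨β, rfl⟩
    exact hZs β z hz
  have hδ : ∀ z ∈ Z, z ∉ H.nilInf → ∃ δ ∈ H.aug, H.hit δ z = z := by
    intro z hz hzi
    obtain ⟨β, hβ, hβz⟩ := H.exists_aug_hit_notMem hzi
    have hzm : z ∈ H.hitSpan (H.hit β z) := by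
      rw [hgen _ (hZs β z hz) hβz]; exact hz
    obtain ⟨γ, hγ⟩ := hzm
    refine ⟨γ ∘ₗ H.hit β, ?_, by rw [← hit_hit, hγ]⟩
    have : β 1 = 0 := hβ
    simp [aug, this]
  set E : Submodule k H.carrier := Submodule.span k
    {x | ∃ p : (H.carrier →ₗ[k] k) × H.carrier,
      ((∀ x ∈ H.nilInf, p.1 x = 0) ∧ p.2 ∈ Z) ∧ H.coh p.1 p.2 = x} with hE
  have hEsub : IsSubcoalgebraOf H.comul E := by
    rw [isSubcoalgebraOf_iff]
    constructor
    · intro β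
      change E ≤ E.comap (H.hit β)
      refine Submodule.span_le.2 ?_
      rintro _ ⟨⟨φ, z⟩, ⟨hφ, hz⟩, rfl⟩
      exact Submodule.subset_span ⟨(φ, H.hit β z), ⟨hφ, hZs β z hz⟩, (H.hit_coh β φ z).symm⟩
    · intro β
      change E ≤ E.comap (H.coh β)
      refine Submodule.span_le.2 ?_
      rintro _ ⟨⟨φ, z⟩, ⟨hφ, hz⟩, rfl⟩
      refine Submodule.subset_span ⟨(β ∘ₗ H.coh φ, z), ⟨fun x hx => ?_, hz⟩,
        (H.coh_coh φ β z).symm⟩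
      rw [← comp_hit]
      exact hφ _ (H.hitStable_nilInf β x hx)
  have hEfd : FiniteDimensional k E := by
    refine Submodule.finiteDimensional_of_le (S₂ := H.cohHull Z) (Submodule.span_mono ?_)
    rintro _ ⟨⟨φ, z⟩, ⟨hφ, hz⟩, rfl⟩
    exact ⟨φ, z, hz, rfl⟩
  have hE0 : E ≠ ⊥ := by
    intro hbot
    obtain ⟨z, hz, hzi⟩ := Set.not_subset.1 hZn
    obtain ⟨φ, hφz, hφ⟩ := exists_dual_ann (k := k) hzi
    have hm : H.coh φ z ∈ E := Submodule.subset_span ⟨(φ, z), ⟨hφ, hz⟩, rfl⟩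
    rw [hbot, Submodule.mem_bot] at hm
    rw [← counit_coh, hm, map_zero] at hφz
    exact hφz rfl
  obtain ⟨D, hDE, ⟨hD, hD0⟩, hDmin⟩ := exists_minimal_submodule
    (fun D => IsSubcoalgebraOf H.comul D ∧ D ≠ ⊥) E ⟨hEsub, hE0⟩
  have hDle : D ≤ k ∙ (1 : H.carrier) := by
    rw [← show coradicalOf H.comul = _ from h]
    refine le_sSup ⟨hD, hD0, fun W hW hWs => ?_⟩
    by_cases hW0 : W = ⊥
    · exact Or.inl hW0
    · exact Or.inr (hDmin W hW ⟨hWs, hW0⟩)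
  have h1E : (1 : H.carrier) ∈ E := by
    obtain ⟨d, hd, hd0⟩ := (Submodule.ne_bot_iff D).1 hD0
    obtain ⟨c, rfl⟩ := Submodule.mem_span_singleton.1 (hDle hd)
    have hc0 : c ≠ 0 := fun hc => hd0 (by rw [hc, zero_smul])
    exact hDE ((Submodule.smul_mem_iff D hc0).1 hd)
  have hlist : ∀ x ∈ E, ∃ l : List ((H.carrier →ₗ[k] k) × H.carrier),
      (∀ p ∈ l, (∀ x ∈ H.nilInf, p.1 x = 0) ∧ p.2 ∈ Z) ∧
      (l.map fun p => H.coh p.1 p.2).sum = x := by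
    intro x hx
    induction hx using Submodule.span_induction with
    | mem x hx =>
      obtain ⟨p, hp, rfl⟩ := hx
      exact ⟨[p], by simpa using hp, by simp⟩
    | zero => exact ⟨[], by simp, by simp⟩
    | add x y _ _ hx hy =>
      obtain ⟨l, hl, rfl⟩ := hx
      obtain ⟨m, hm, rfl⟩ := hy
      refine ⟨l ++ m, fun p hp => ?_, by simp⟩
      rcases List.mem_append.1 hp with hp | hp
      · exact hl p hp
      · exact hm p hp
    | smul c x _ hx =>
      obtain ⟨l, hl, rfl⟩ := hx
      refine ⟨l.map fun p => (p.1, c • p.2), fun p hp => ?_, ?_⟩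
      · obtain ⟨q, hq, rfl⟩ := List.mem_map.1 hp
        exact ⟨(hl q hq).1, Z.smul_mem c (hl q hq).2⟩
      · rw [List.smul_sum, List.map_map, List.map_map]
        congr 1
        refine List.map_congr_left fun p _ => ?_
        simp
  obtain ⟨l, hl, hsum⟩ := hlist 1 h1E
  exact H.sum_coh_ne_one Z hZs hδ l hl hsum

/-- A Hopf superalgebra is irreducible iff it is conilpotent. -/
lemma isIrreducible_iff_conil : H.IsIrreducible ↔ H.Conil :=
  ⟨IsIrreducible.conil H, Conil.isIrreducible H⟩

section Quotient

variable {H} {B : HopfSuperalgebra k} (π : HopfSuperalgebra.Hom H B)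

lemma Hom.hit_map (β : B.carrier →ₗ[k] k) (a : H.carrier) :
    B.hit β (π.toLinearMap a) = π.toLinearMap (H.hit (β ∘ₗ π.toLinearMap) a) := by
  simp only [hit, LinearMap.comp_apply, π.map_comul']
  induction H.comul a with
  | zero => simp
  | add x y hx hy => simp only [map_add, hx, hy]
  | tmul x y => simp

lemma Hom.map_mem_nil (n : ℕ) (a : H.carrier) (ha : a ∈ H.nil H.aug n) :
    π.toLinearMap a ∈ B.nil B.aug n := by
  induction n generalizing a with
  | zero => rw [nil, Submodule.mem_bot] at ha ⊢; simp [ha]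
  | succ n ih =>
    rw [mem_nil_succ] at ha ⊢
    intro ν hν
    rw [π.hit_map]
    refine ih _ (ha _ ?_)
    have : ν 1 = 0 := hν
    simp [aug, π.map_one', this]

/-- Conilpotency passes to quotients. -/
lemma Hom.conil (hsurj : Function.Surjective π.toLinearMap) (h : H.Conil) : B.Conil := by
  intro b
  obtain ⟨a, rfl⟩ := hsurj b
  obtain ⟨n, hn⟩ := h a
  exact ⟨n, π.map_mem_nil n a hn⟩

end Quotient

end HopfSuperalgebra

namespace HopfSuperalgebra

variable {k : Type} [Field k] (H : HopfSuperalgebra k)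

/-! ### Parity and the twisted product on `H ⊗ H` -/

@[simp] lemma pe_po' (a : H.carrier) : H.pe (H.po a) = 0 := H.pe_po a

@[simp] lemma po_pe' (a : H.carrier) : H.po (H.pe a) = 0 := H.po_pe a

lemma pe_eq (a : H.carrier) : H.pe a = a - H.po a := eq_sub_of_add_eq (H.pe_add_po a)

lemma po_eq (a : H.carrier) : H.po a = a - H.pe a := eq_sub_of_add_eq' (H.pe_add_po a)

@[simp] lemma pe_pe (a : H.carrier) : H.pe (H.pe a) = H.pe a := by
  rw [H.pe_eq (H.pe a), po_pe', sub_zero]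

@[simp] lemma po_po (a : H.carrier) : H.po (H.po a) = H.po a := by
  rw [H.po_eq (H.po a), pe_po', sub_zero]

lemma po_of_odd {a : H.carrier} (h : H.pe a = 0) : H.po a = a := by rw [po_eq, h, sub_zero]

lemma pe_of_even {a : H.carrier} (h : H.po a = 0) : H.pe a = a := by rw [pe_eq, h, sub_zero]

@[simp] lemma po_one : H.po 1 = 0 := H.one_even

@[simp] lemma pe_one : H.pe 1 = 1 := H.pe_of_even H.one_even

lemma counit_po (a : H.carrier) : H.counit (H.po a) = 0 := H.counit_odd _ (H.pe_po a)

lemma pe_mul (a b : H.carrier) : H.pe (a * b) = H.pe a * H.pe b + H.po a * H.po b := by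
  conv_lhs => rw [← H.pe_add_po a, ← H.pe_add_po b]
  simp only [add_mul, mul_add, map_add]
  rw [H.mul_even_odd (H.pe a) (H.po b) (by simp) (by simp),
    H.mul_odd_even (H.po a) (H.pe b) (by simp) (by simp),
    H.pe_of_even (H.mul_even_even (H.pe a) (H.pe b) (by simp) (by simp)),
    H.pe_of_even (H.mul_odd_odd (H.po a) (H.po b) (by simp) (by simp))]
  abel

lemma po_mul (a b : H.carrier) : H.po (a * b) = H.pe a * H.po b + H.po a * H.pe b := by
  conv_lhs => rw [← H.pe_add_po a, ← H.pe_add_po b]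
  simp only [add_mul, mul_add, map_add]
  rw [H.mul_even_even (H.pe a) (H.pe b) (by simp) (by simp),
    H.mul_odd_odd (H.po a) (H.po b) (by simp) (by simp),
    H.po_of_odd (H.mul_even_odd (H.pe a) (H.po b) (by simp) (by simp)),
    H.po_of_odd (H.mul_odd_even (H.po a) (H.pe b) (by simp) (by simp))]
  abel

/-- The parity automorphism `a ↦ (-1)^{|a|} a`. -/
def par : H.carrier →ₗ[k] H.carrier := H.pe - H.po

lemma par_apply (a : H.carrier) : H.par a = H.pe a - H.po a := rfl

lemma par_mul (a b : H.carrier) : H.par (a * b) = H.par a * H.par b := by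
  simp only [par_apply, pe_mul, po_mul, sub_mul, mul_sub]
  abel

@[simp] lemma par_one : H.par 1 = 1 := by simp [par_apply]

@[simp] lemma par_par (a : H.carrier) : H.par (H.par a) = a := by
  simp only [par_apply, map_sub, pe_pe, pe_po', po_pe', po_po]
  rw [sub_zero, zero_sub, sub_neg_eq_add, pe_add_po]

lemma par_odd {a : H.carrier} (h : H.pe a = 0) : H.par a = -a := by
  rw [par_apply, h, H.po_of_odd h, zero_sub]

lemma par_even {a : H.carrier} (h : H.po a = 0) : H.par a = a := by
  rw [par_apply, h, H.pe_of_even h, sub_zero]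

lemma counit_par (a : H.carrier) : H.counit (H.par a) = H.counit a := by
  rw [par_apply, pe_eq, map_sub, map_sub, counit_po, sub_zero, sub_zero]

lemma antipode_po (a : H.carrier) : H.antipode (H.po a) = H.po (H.antipode a) := by
  rw [po_eq, map_sub, antipode_pe, ← po_eq]

/-- The multiplication of `H ⊗ H` twisted by the Koszul sign. -/
def sm : H.carrier ⊗[k] H.carrier →ₗ[k] H.carrier ⊗[k] H.carrier →ₗ[k]
    H.carrier ⊗[k] H.carrier :=
  LinearMap.mul k _ - (2 : k) • (LinearMap.mul k (H.carrier ⊗[k] H.carrier)).compl₁₂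
    (TensorProduct.map LinearMap.id H.po) (TensorProduct.map H.po LinearMap.id)

lemma comul_mul' (a b : H.carrier) : H.comul (a * b) = H.sm (H.comul a) (H.comul b) :=
  H.comul_mul a b

lemma sm_tmul (a b c d : H.carrier) : H.sm (a ⊗ₜ b) (c ⊗ₜ d) =
    (a * H.pe c) ⊗ₜ[k] (b * d) + (a * H.po c) ⊗ₜ[k] (H.par b * d) := by
  have h : H.par b = b - (2 : k) • H.po b := by
    rw [par_apply, pe_eq, two_smul]; abel
  simp only [sm, LinearMap.sub_apply, LinearMap.smul_apply, LinearMap.compl₁₂_apply,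
    LinearMap.mul_apply', TensorProduct.map_tmul, LinearMap.id_apply,
    Algebra.TensorProduct.tmul_mul_tmul]
  rw [h, sub_mul, TensorProduct.tmul_sub, pe_eq, mul_sub, TensorProduct.sub_tmul, smul_mul_assoc,
    TensorProduct.tmul_smul]
  abel

lemma sm_one_left_mul (a : H.carrier) (u w : H.carrier ⊗[k] H.carrier) :
    H.sm ((a ⊗ₜ 1) * u) w = (a ⊗ₜ 1) * H.sm u w := by
  induction u with
  | zero => simp
  | add x y hx hy => simp only [mul_add, map_add, LinearMap.add_apply, hx, hy]
  | tmul p q =>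
    induction w with
    | zero => simp
    | add x y hx hy => simp only [mul_add, map_add, hx, hy]
    | tmul x y =>
      simp only [Algebra.TensorProduct.tmul_mul_tmul, sm_tmul, mul_add, one_mul, mul_assoc]

lemma evL_sm (ζ : H.carrier →ₗ[k] k) (e f : H.carrier) (u : H.carrier ⊗[k] H.carrier) :
    H.evL ζ (H.sm (e ⊗ₜ f) u) =
      f * H.evL (ζ ∘ₗ LinearMap.mulLeft k e ∘ₗ H.pe) u +
        H.par f * H.evL (ζ ∘ₗ LinearMap.mulLeft k e ∘ₗ H.po) u := by
  induction u with
  | zero => simp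
  | add x y hx hy => simp only [mul_add, map_add, hx, hy]; abel
  | tmul x y => simp [sm_tmul]

lemma coh_mul (ζ : H.carrier →ₗ[k] k) (a b : H.carrier) :
    H.coh ζ (a * b) = H.evL ζ (H.sm (H.comul a) (H.comul b)) := by
  rw [← comul_mul']; rfl

/-! ### Antipode identities -/

lemma antipode_comul' (a : H.carrier) : (LinearMap.mul' k H.carrier)
    ((TensorProduct.map H.antipode LinearMap.id) (H.comul a)) =
      H.counit a • (1 : H.carrier) := by
  rw [H.antipode_comul, Algebra.algebraMap_eq_smul_one]

lemma comul_antipode' (a : H.carrier) : (LinearMap.mul' k H.carrier)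
    ((TensorProduct.map LinearMap.id H.antipode) (H.comul a)) =
      H.counit a • (1 : H.carrier) := by
  rw [H.comul_antipode, Algebra.algebraMap_eq_smul_one]

@[simp] lemma antipode_one : H.antipode 1 = 1 := by
  have := H.antipode_comul' 1
  simpa [H.comul_one, H.counit_one] using this

/-- `a ⊗ b ↦ μ(a ⊗ S b)`. -/
def mulS : H.carrier ⊗[k] H.carrier →ₗ[k] H.carrier :=
  LinearMap.mul' k H.carrier ∘ₗ TensorProduct.map LinearMap.id H.antipode

@[simp] lemma mulS_tmul (a b : H.carrier) : H.mulS (a ⊗ₜ b) = a * H.antipode b := by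
  simp [mulS]

lemma mulS_comul (a : H.carrier) : H.mulS (H.comul a) = H.counit a • (1 : H.carrier) :=
  H.comul_antipode' a

lemma mulS_left_mul (a : H.carrier) (u : H.carrier ⊗[k] H.carrier) :
    H.mulS ((a ⊗ₜ 1) * u) = a * H.mulS u := by
  induction u with
  | zero => simp
  | add x y hx hy => simp only [mul_add, map_add, hx, hy]
  | tmul x y => simp [mul_assoc]

/-- `a ⊗ b ↦ (S a ⊗ 1) Δ b`. -/
def antL : H.carrier ⊗[k] H.carrier →ₗ[k] H.carrier ⊗[k] H.carrier :=
  TensorProduct.lift ((LinearMap.mul k (H.carrier ⊗[k] H.carrier)).compl₁₂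
    ((TensorProduct.mk k H.carrier H.carrier).flip 1 ∘ₗ H.antipode) H.comul)

@[simp] lemma antL_tmul (a b : H.carrier) :
    H.antL (a ⊗ₜ b) = (H.antipode a ⊗ₜ 1) * H.comul b := by
  simp [antL]

/-- `Σ (S h₁ ⊗ 1) Δ h₂ = 1 ⊗ h`. -/
lemma antL_comul (h : H.carrier) : H.antL (H.comul h) = 1 ⊗ₜ[k] h := by
  set G : H.carrier ⊗[k] (H.carrier ⊗[k] H.carrier) →ₗ[k] H.carrier ⊗[k] H.carrier :=
    TensorProduct.map (LinearMap.mul' k H.carrier ∘ₗ TensorProduct.map H.antipode LinearMap.id)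
      LinearMap.id ∘ₗ (TensorProduct.assoc k _ _ _).symm.toLinearMap with hG
  have h1 : ∀ t : H.carrier ⊗[k] H.carrier,
      H.antL t = G (TensorProduct.map LinearMap.id H.comul t) := by
    intro t
    induction t with
    | zero => simp
    | add x y hx hy => simp only [map_add, hx, hy]
    | tmul p q =>
      rw [antL_tmul, TensorProduct.map_tmul]
      induction H.comul q with
      | zero => simp
      | add x y hx hy => simp only [mul_add, TensorProduct.tmul_add, map_add, hx, hy]
      | tmul x y => simp [hG]
  rw [h1, ← coassoc_apply, hG]
  simp only [LinearMap.comp_apply, LinearEquiv.coe_coe, LinearEquiv.symm_apply_apply]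
  conv_rhs => rw [← H.counit_comul h]
  induction H.comul h with
  | zero => simp
  | add x y hx hy => simp only [map_add, hx, hy, TensorProduct.tmul_add]
  | tmul x y =>
    simp only [TensorProduct.map_tmul, LinearMap.comp_apply, antipode_comul', LinearMap.id_apply,
      TensorProduct.lid_tmul, TensorProduct.tmul_smul, TensorProduct.smul_tmul']

/-- `μ(1 ⊗ S)((1 ⊗ h) ⊙ Δ a) = ε(a) S(h)`. -/
lemma mulS_sm (h a : H.carrier) :
    H.mulS (H.sm (1 ⊗ₜ h) (H.comul a)) = H.counit a • H.antipode h := by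
  have h1 : ∀ t : H.carrier ⊗[k] H.carrier, H.mulS (H.sm (H.antL t) (H.comul a)) =
      H.counit a • H.antipode (TensorProduct.rid k _
        (TensorProduct.map LinearMap.id H.counit t)) := by
    intro t
    induction t with
    | zero => simp
    | add x y hx hy => simp only [map_add, LinearMap.add_apply, hx, hy, smul_add]
    | tmul p q =>
      rw [antL_tmul, sm_one_left_mul, ← comul_mul', mulS_left_mul, mulS_comul, H.counit_mul]
      simp [smul_smul, mul_comm]
  rw [← antL_comul, h1, H.comul_counit]

/-- `a ⊗ b ↦ (1 ⊗ a) ⊙ Δ(S b)`. -/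
def theta : H.carrier ⊗[k] H.carrier →ₗ[k] H.carrier ⊗[k] H.carrier :=
  TensorProduct.lift (H.sm.compl₁₂ (TensorProduct.mk k H.carrier H.carrier 1)
    (H.comul ∘ₗ H.antipode))

@[simp] lemma theta_tmul (a b : H.carrier) :
    H.theta (a ⊗ₜ b) = H.sm (1 ⊗ₜ a) (H.comul (H.antipode b)) := by
  simp [theta]

/-- `Σ (1 ⊗ h₁) ⊙ Δ(S h₂) = S h ⊗ 1`, a form of the anticomultiplicativity of `S`. -/
lemma theta_comul (h : H.carrier) : H.theta (H.comul h) = H.antipode h ⊗ₜ[k] 1 := by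
  set G : H.carrier ⊗[k] (H.carrier ⊗[k] H.carrier) →ₗ[k] H.carrier ⊗[k] H.carrier :=
    TensorProduct.lift ((LinearMap.mul k (H.carrier ⊗[k] H.carrier)).compl₁₂
      ((TensorProduct.mk k H.carrier H.carrier).flip 1 ∘ₗ H.antipode)
      (H.comul ∘ₗ H.mulS)) with hG
  have h1 : ∀ t : H.carrier ⊗[k] H.carrier, H.theta t =
      G ((TensorProduct.assoc k _ _ _) (TensorProduct.map H.comul LinearMap.id t)) := by
    intro t
    induction t with
    | zero => simp
    | add x y hx hy => simp only [map_add, hx, hy]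
    | tmul p q =>
      rw [theta_tmul, ← antL_comul, TensorProduct.map_tmul]
      induction H.comul p with
      | zero => simp
      | add x y hx hy =>
        simp only [TensorProduct.add_tmul, map_add, LinearMap.add_apply, hx, hy]
      | tmul x y => simp [hG, sm_one_left_mul, ← comul_mul']
  rw [h1, coassoc_apply, hG]
  conv_rhs => rw [← H.comul_counit h]
  induction H.comul h with
  | zero => simp
  | add x y hx hy => simp only [map_add, hx, hy, TensorProduct.add_tmul]
  | tmul x y =>
    simp [mulS_comul, H.comul_one, TensorProduct.smul_tmul',
      ← Algebra.TensorProduct.one_def]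

end HopfSuperalgebra

namespace HopfSuperalgebra

variable {k : Type} [Field k] (H : HopfSuperalgebra k)

/-- For odd `x`, `S(x a) = ± S(a) S(x)`. -/
lemma antipode_odd_mul {x : H.carrier} (hx : H.pe x = 0) (a : H.carrier) :
    H.antipode (x * a) = H.par (H.antipode a) * H.antipode x := by
  have hsm : ∀ t : H.carrier ⊗[k] H.carrier, H.mulS (H.sm (1 ⊗ₜ x) t) =
      LinearMap.mul' k _ (TensorProduct.map H.par
        (H.antipode ∘ₗ LinearMap.mulLeft k x) t) := by
    intro t
    induction t with
    | zero => simp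
    | add x y hx hy => simp only [map_add, hx, hy]
    | tmul p q =>
      rw [sm_tmul, H.par_odd hx]
      simp [par_apply, sub_mul, ← sub_eq_add_neg]
  set G : H.carrier ⊗[k] (H.carrier ⊗[k] H.carrier) →ₗ[k] H.carrier :=
    LinearMap.mul' k _ ∘ₗ TensorProduct.map (H.par ∘ₗ H.antipode)
      (LinearMap.mul' k _ ∘ₗ TensorProduct.map H.par
        (H.antipode ∘ₗ LinearMap.mulLeft k x)) with hG
  have h1 : ∀ t : H.carrier ⊗[k] H.carrier,
      G ((TensorProduct.assoc k _ _ _) (TensorProduct.map H.comul LinearMap.id t)) =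
      H.antipode (x * TensorProduct.lid k _ (TensorProduct.map H.counit LinearMap.id t)) := by
    intro t
    induction t with
    | zero => simp
    | add x y hx hy => simp only [map_add, hx, hy, mul_add]
    | tmul p q =>
      have h2 : ∀ s : H.carrier ⊗[k] H.carrier,
          G ((TensorProduct.assoc k _ _ _) (s ⊗ₜ q)) =
          H.par (LinearMap.mul' k _ (TensorProduct.map H.antipode LinearMap.id s)) *
            H.antipode (x * q) := by
        intro s
        induction s with
        | zero => simp
        | add x y hx hy => simp only [map_add, hx, hy, TensorProduct.add_tmul, add_mul]
        | tmul y z => simp [hG, par_mul, mul_assoc]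
      rw [TensorProduct.map_tmul, LinearMap.id_apply, h2, antipode_comul']
      simp
  have h3 := h1 (H.comul a)
  rw [coassoc_apply, H.counit_comul] at h3
  rw [← h3, hG]
  conv_rhs => rw [← H.comul_counit a]
  clear h3 h1
  induction H.comul a with
  | zero => simp
  | add x y hx hy => simp only [map_add, hx, hy, add_mul]
  | tmul y z =>
    simp only [LinearMap.comp_apply, TensorProduct.map_tmul, LinearMap.id_apply, ← hsm, mulS_sm]
    simp

/-- `κ(a) = Σ S(po a₁) a₂`. -/
def kap : H.carrier →ₗ[k] H.carrier :=
  LinearMap.mul' k _ ∘ₗ TensorProduct.map (H.antipode ∘ₗ H.po) LinearMap.id ∘ₗ H.comul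

/-- `Σ κ(a₁) S(a₂) = S(po a)`. -/
lemma mulS_kap (a : H.carrier) :
    H.mulS (TensorProduct.map H.kap LinearMap.id (H.comul a)) = H.antipode (H.po a) := by
  set G : H.carrier ⊗[k] (H.carrier ⊗[k] H.carrier) →ₗ[k] H.carrier :=
    LinearMap.mul' k _ ∘ₗ TensorProduct.map (H.antipode ∘ₗ H.po) H.mulS with hG
  have h1 : ∀ t : H.carrier ⊗[k] H.carrier,
      H.mulS (TensorProduct.map H.kap LinearMap.id t) =
      G ((TensorProduct.assoc k _ _ _) (TensorProduct.map H.comul LinearMap.id t)) := by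
    intro t
    induction t with
    | zero => simp
    | add x y hx hy => simp only [map_add, hx, hy]
    | tmul p q =>
      rw [TensorProduct.map_tmul, TensorProduct.map_tmul, mulS_tmul, kap]
      simp only [LinearMap.comp_apply]
      induction H.comul p with
      | zero => simp
      | add x y hx hy => simp only [map_add, add_mul, hx, hy, TensorProduct.add_tmul]
      | tmul x y => simp [hG, mul_assoc]
  rw [h1, coassoc_apply, hG]
  conv_rhs => rw [← H.comul_counit a]
  induction H.comul a with
  | zero => simp
  | add x y hx hy => simp only [map_add, hx, hy]
  | tmul x y => simp [mulS_comul]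

/-- `P(a) = Σ po(a₁) S(a₂)`: the projection onto coinvariants. -/
def coinv : H.carrier →ₗ[k] H.carrier :=
  H.mulS ∘ₗ TensorProduct.map H.po LinearMap.id ∘ₗ H.comul

/-- `Σ P(a₁) a₂ = po a`. -/
lemma mul_coinv (a : H.carrier) :
    LinearMap.mul' k _ (TensorProduct.map H.coinv LinearMap.id (H.comul a)) = H.po a := by
  set G : H.carrier ⊗[k] (H.carrier ⊗[k] H.carrier) →ₗ[k] H.carrier :=
    LinearMap.mul' k _ ∘ₗ TensorProduct.map H.po
      (LinearMap.mul' k _ ∘ₗ TensorProduct.map H.antipode LinearMap.id) with hG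
  have h1 : ∀ t : H.carrier ⊗[k] H.carrier,
      LinearMap.mul' k _ (TensorProduct.map H.coinv LinearMap.id t) =
      G ((TensorProduct.assoc k _ _ _) (TensorProduct.map H.comul LinearMap.id t)) := by
    intro t
    induction t with
    | zero => simp
    | add x y hx hy => simp only [map_add, hx, hy]
    | tmul p q =>
      rw [TensorProduct.map_tmul, TensorProduct.map_tmul, coinv]
      simp only [LinearMap.comp_apply, LinearMap.mul'_apply]
      induction H.comul p with
      | zero => simp
      | add x y hx hy => simp only [map_add, add_mul, hx, hy, TensorProduct.add_tmul]
      | tmul x y => simp [hG, mul_assoc]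
  rw [h1, coassoc_apply, hG]
  conv_rhs => rw [← H.comul_counit a]
  induction H.comul a with
  | zero => simp
  | add x y hx hy => simp only [map_add, hx, hy]
  | tmul x y => simp [antipode_comul']

/-- `Σ ((po ⊗ 1) Δ a₁) ⊙ Δ(S a₂) = P(a) ⊗ 1`. -/
lemma coinv_tmul_one (a : H.carrier) :
    TensorProduct.lift (H.sm.compl₁₂ (TensorProduct.map H.po LinearMap.id ∘ₗ H.comul)
      (H.comul ∘ₗ H.antipode)) (H.comul a) = H.coinv a ⊗ₜ[k] 1 := by
  set G : H.carrier ⊗[k] (H.carrier ⊗[k] H.carrier) →ₗ[k] H.carrier ⊗[k] H.carrier :=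
    TensorProduct.lift ((LinearMap.mul k (H.carrier ⊗[k] H.carrier)).compl₁₂
      ((TensorProduct.mk k H.carrier H.carrier).flip 1 ∘ₗ H.po) H.theta) with hG
  have h1 : ∀ t : H.carrier ⊗[k] H.carrier,
      TensorProduct.lift (H.sm.compl₁₂ (TensorProduct.map H.po LinearMap.id ∘ₗ H.comul)
        (H.comul ∘ₗ H.antipode)) t =
      G ((TensorProduct.assoc k _ _ _) (TensorProduct.map H.comul LinearMap.id t)) := by
    intro t
    induction t with
    | zero => simp
    | add x y hx hy => simp only [map_add, hx, hy]
    | tmul p q =>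
      rw [TensorProduct.map_tmul, TensorProduct.lift.tmul, LinearMap.compl₁₂_apply]
      simp only [LinearMap.comp_apply]
      induction H.comul p with
      | zero => simp
      | add x y hx hy =>
        simp only [TensorProduct.add_tmul, map_add, LinearMap.add_apply, hx, hy]
      | tmul x y => simp [hG, ← sm_one_left_mul]
  rw [h1, coassoc_apply, hG, coinv]
  simp only [LinearMap.comp_apply]
  induction H.comul a with
  | zero => simp
  | add x y hx hy => simp only [map_add, hx, hy, TensorProduct.add_tmul]
  | tmul x y => simp [theta_comul]

end HopfSuperalgebra

namespace HopfSuperalgebra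

variable {k : Type} [Field k] (H : HopfSuperalgebra k)

/-! ### The ideal generated by a finite-dimensional space of odd elements -/

/-- The subspace `K ⊗ L` of `H ⊗ H`. -/
def tens (K L : Submodule k H.carrier) : Submodule k (H.carrier ⊗[k] H.carrier) :=
  Submodule.map₂ (TensorProduct.mk k H.carrier H.carrier) K L

variable {H} in
lemma tmul_mem_tens {K L : Submodule k H.carrier} {x y : H.carrier} (hx : x ∈ K) (hy : y ∈ L) :
    x ⊗ₜ[k] y ∈ H.tens K L := Submodule.apply_mem_map₂ _ hx hy

variable {H} in
lemma tens_le {K L : Submodule k H.carrier} {S : Submodule k (H.carrier ⊗[k] H.carrier)} :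
    H.tens K L ≤ S ↔ ∀ x ∈ K, ∀ y ∈ L, x ⊗ₜ[k] y ∈ S := Submodule.map₂_le

variable {H} in
lemma tens_mono {K L K' L' : Submodule k H.carrier} (h : K ≤ K') (h' : L ≤ L') :
    H.tens K L ≤ H.tens K' L' := Submodule.map₂_le_map₂ h h'

lemma range_map_le_tens (K L : Submodule k H.carrier) :
    LinearMap.range (TensorProduct.map K.subtype L.subtype) ≤ H.tens K L := by
  rintro _ ⟨t, rfl⟩
  induction t with
  | zero => simp
  | add x y hx hy => rw [map_add]; exact add_mem hx hy
  | tmul x y => exact tmul_mem_tens x.2 y.2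

lemma evL_mem_of_tens {K L : Submodule k H.carrier} {t : H.carrier ⊗[k] H.carrier}
    (ht : t ∈ H.tens K L) (ζ : H.carrier →ₗ[k] k) : H.evL ζ t ∈ L := by
  have : H.tens K L ≤ L.comap (H.evL ζ) := tens_le.2 fun x _ y hy => by
    simpa using L.smul_mem _ hy
  exact this ht

lemma evR_mem_of_tens {K L : Submodule k H.carrier} {t : H.carrier ⊗[k] H.carrier}
    (ht : t ∈ H.tens K L) (ζ : H.carrier →ₗ[k] k) : H.evR ζ t ∈ K := by
  have : H.tens K L ≤ K.comap (H.evR ζ) := tens_le.2 fun x hx y _ => by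
    simpa using K.smul_mem _ hx
  exact this ht

/-- A finite-dimensional graded subcoalgebra of a super-commutative Hopf superalgebra in
characteristic `≠ 2`. -/
structure OddDatum where
  C : Submodule k H.carrier
  fd : FiniteDimensional k C
  hitC : H.HitStable C
  cohC : H.CohStable C
  peC : ∀ x ∈ C, H.pe x ∈ C
  comm : H.IsSuperCommutative
  two : (2 : k) ≠ 0

namespace OddDatum

variable {H} (D : OddDatum H)

/-- The odd part of the subcoalgebra. -/
def X : Submodule k H.carrier := D.C ⊓ LinearMap.ker H.pe

/-- The even part of the subcoalgebra. -/
def E : Submodule k H.carrier := D.C ⊓ LinearMap.ker H.po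

lemma pe_X {x : H.carrier} (hx : x ∈ D.X) : H.pe x = 0 := hx.2

lemma po_X {x : H.carrier} (hx : x ∈ D.X) : H.po x = x := H.po_of_odd hx.2

lemma po_E {x : H.carrier} (hx : x ∈ D.E) : H.po x = 0 := hx.2

lemma pe_E {x : H.carrier} (hx : x ∈ D.E) : H.pe x = x := H.pe_of_even hx.2

lemma pe_mem_E {x : H.carrier} (hx : x ∈ D.C) : H.pe x ∈ D.E :=
  ⟨D.peC x hx, by simp⟩

lemma po_mem_X {x : H.carrier} (hx : x ∈ D.C) : H.po x ∈ D.X :=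
  ⟨by rw [po_eq]; exact sub_mem hx (D.peC x hx), by simp⟩

lemma comul_mem {a : H.carrier} (ha : a ∈ D.C) : H.comul a ∈ H.tens D.C D.C :=
  H.range_map_le_tens _ _ ((H.isSubcoalgebraOf_iff D.C).2 ⟨D.hitC, D.cohC⟩ a ha)

lemma comul_X {x : H.carrier} (hx : x ∈ D.X) : H.comul x ∈ H.tens D.X D.E ⊔ H.tens D.E D.X := by
  rw [H.comul_odd x (D.pe_X hx)]
  refine add_mem (Submodule.mem_sup_right ?_) (Submodule.mem_sup_left ?_)
  · have : H.tens D.C D.C ≤ (H.tens D.E D.X).comap (TensorProduct.map H.pe H.po) :=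
      tens_le.2 fun x hx y hy => tmul_mem_tens (D.pe_mem_E hx) (D.po_mem_X hy)
    exact this (D.comul_mem hx.1)
  · have : H.tens D.C D.C ≤ (H.tens D.X D.E).comap (TensorProduct.map H.po H.pe) :=
      tens_le.2 fun x hx y hy => tmul_mem_tens (D.po_mem_X hx) (D.pe_mem_E hy)
    exact this (D.comul_mem hx.1)

lemma comul_E {x : H.carrier} (hx : x ∈ D.E) : H.comul x ∈ H.tens D.E D.E ⊔ H.tens D.X D.X := by
  rw [H.comul_even x (D.po_E hx)]
  refine add_mem (Submodule.mem_sup_left ?_) (Submodule.mem_sup_right ?_)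
  · have : H.tens D.C D.C ≤ (H.tens D.E D.E).comap (TensorProduct.map H.pe H.pe) :=
      tens_le.2 fun x hx y hy => tmul_mem_tens (D.pe_mem_E hx) (D.pe_mem_E hy)
    exact this (D.comul_mem hx.1)
  · have : H.tens D.C D.C ≤ (H.tens D.X D.X).comap (TensorProduct.map H.po H.po) :=
      tens_le.2 fun x hx y hy => tmul_mem_tens (D.po_mem_X hx) (D.po_mem_X hy)
    exact this (D.comul_mem hx.1)

lemma po_comul_X {x : H.carrier} (hx : x ∈ D.X) :
    TensorProduct.map H.po LinearMap.id (H.comul x) ∈ H.tens D.X D.E := by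
  have : H.tens D.X D.E ⊔ H.tens D.E D.X ≤
      (H.tens D.X D.E).comap (TensorProduct.map H.po LinearMap.id) := by
    refine sup_le (tens_le.2 fun x hx y hy => ?_) (tens_le.2 fun x hx y hy => ?_)
    · simpa [D.po_X hx] using tmul_mem_tens hx hy
    · simp [D.po_E hx]
  exact this (D.comul_X hx)

lemma pe_comul_X {x : H.carrier} (hx : x ∈ D.X) :
    TensorProduct.map H.pe LinearMap.id (H.comul x) ∈ H.tens D.E D.X := by
  have : H.tens D.X D.E ⊔ H.tens D.E D.X ≤
      (H.tens D.E D.X).comap (TensorProduct.map H.pe LinearMap.id) := by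
    refine sup_le (tens_le.2 fun x hx y hy => ?_) (tens_le.2 fun x hx y hy => ?_)
    · simp [D.pe_X hx]
    · simpa [D.pe_E hx] using tmul_mem_tens hx hy
  exact this (D.comul_X hx)

lemma po_comul_E {x : H.carrier} (hx : x ∈ D.E) :
    TensorProduct.map H.po LinearMap.id (H.comul x) ∈ H.tens D.X D.X := by
  have : H.tens D.E D.E ⊔ H.tens D.X D.X ≤
      (H.tens D.X D.X).comap (TensorProduct.map H.po LinearMap.id) := by
    refine sup_le (tens_le.2 fun x hx y hy => ?_) (tens_le.2 fun x hx y hy => ?_)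
    · simp [D.po_E hx]
    · simpa [D.po_X hx] using tmul_mem_tens hx hy
  exact this (D.comul_E hx)

lemma pe_add_po_comul (t : H.carrier ⊗[k] H.carrier) :
    TensorProduct.map H.pe LinearMap.id t + TensorProduct.map H.po LinearMap.id t = t := by
  induction t with
  | zero => simp
  | add x y hx hy =>
    conv_rhs => rw [← hx, ← hy]
    simp only [map_add]; abel
  | tmul x y => simp [← TensorProduct.add_tmul, H.pe_add_po]

/-! #### Super-commutation rules -/

/-- An odd element can be moved to the left at the cost of a sign. -/
lemma mul_odd (D : H.OddDatum) {x : H.carrier} (hx : H.pe x = 0) (a : H.carrier) : a * x = x * H.par a := by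
  conv_lhs => rw [← H.pe_add_po a, add_mul, D.comm.1 (H.pe a) x (by simp),
    D.comm.2 (H.po a) x (by simp) hx]
  rw [par_apply, mul_sub, sub_eq_add_neg]

lemma odd_mul (D : H.OddDatum) {x : H.carrier} (hx : H.pe x = 0) (a : H.carrier) : x * a = H.par a * x := by
  rw [D.mul_odd hx, par_par]

lemma sq_odd (D : H.OddDatum) {x : H.carrier} (hx : H.pe x = 0) : x * x = 0 := by
  have h := D.comm.2 x x hx hx
  have h2 : (2 : k) • (x * x) = 0 := by
    rw [two_smul]; nth_rewrite 1 [h]; simp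
  exact (smul_eq_zero.1 h2).resolve_left D.two

/-- The powers of the ideal generated by `X`: `Fp 0 = ⊤` and `Fp (r + 1) = X · Fp r`. -/
def Fp : ℕ → Submodule k H.carrier
  | 0 => ⊤
  | r + 1 => D.X * Fp r

lemma mem_Fp_zero (a : H.carrier) : a ∈ D.Fp 0 := Submodule.mem_top

lemma mul_mem_Fp_succ {r : ℕ} {x a : H.carrier} (hx : x ∈ D.X) (ha : a ∈ D.Fp r) :
    x * a ∈ D.Fp (r + 1) := Submodule.mul_mem_mul hx ha

lemma Fp_succ_le {r : ℕ} {S : Submodule k H.carrier} :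
    D.Fp (r + 1) ≤ S ↔ ∀ x ∈ D.X, ∀ a ∈ D.Fp r, x * a ∈ S := Submodule.mul_le

lemma X_le_F : D.X ≤ D.Fp 1 := fun x hx => by
  simpa using D.mul_mem_Fp_succ (r := 0) hx (D.mem_Fp_zero 1)

lemma par_mem_Fp {r : ℕ} {a : H.carrier} (ha : a ∈ D.Fp r) : H.par a ∈ D.Fp r := by
  induction r generalizing a with
  | zero => exact D.mem_Fp_zero _
  | succ r ih =>
    have : D.Fp (r + 1) ≤ (D.Fp (r + 1)).comap H.par := D.Fp_succ_le.2 fun x hx a ha => by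
      rw [Submodule.mem_comap, par_mul, H.par_odd (D.pe_X hx), neg_mul]
      exact neg_mem (D.mul_mem_Fp_succ hx (ih ha))
    exact this ha

lemma pe_mem_Fp {r : ℕ} {b : H.carrier} (hb : b ∈ D.Fp r) : H.pe b ∈ D.Fp r := by
  have h2 : H.pe b = (2 : k)⁻¹ • (b + H.par b) := by
    rw [par_apply]
    nth_rewrite 2 [← H.pe_add_po b]
    rw [show H.pe b + H.po b + (H.pe b - H.po b) = (2 : k) • H.pe b by
      rw [two_smul]; abel, inv_smul_smul₀ D.two]
  rw [h2]
  exact Submodule.smul_mem _ _ (add_mem hb (D.par_mem_Fp hb))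

lemma po_mem_Fp {r : ℕ} {b : H.carrier} (hb : b ∈ D.Fp r) : H.po b ∈ D.Fp r := by
  rw [po_eq]; exact sub_mem hb (D.pe_mem_Fp hb)

lemma mul_mem_Fp_right {r : ℕ} {a : H.carrier} (ha : a ∈ D.Fp r) (b : H.carrier) :
    a * b ∈ D.Fp r := by
  induction r generalizing a with
  | zero => exact D.mem_Fp_zero _
  | succ r ih =>
    have : D.Fp (r + 1) ≤ (D.Fp (r + 1)).comap (LinearMap.mulRight k b) :=
      D.Fp_succ_le.2 fun x hx a ha => by
        rw [Submodule.mem_comap, LinearMap.mulRight_apply, mul_assoc]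
        exact D.mul_mem_Fp_succ hx (ih ha)
    exact this ha

lemma mul_mem_Fp_left {r : ℕ} {a : H.carrier} (ha : a ∈ D.Fp r) (b : H.carrier) :
    b * a ∈ D.Fp r := by
  induction r generalizing a b with
  | zero => exact D.mem_Fp_zero _
  | succ r ih =>
    have : D.Fp (r + 1) ≤ (D.Fp (r + 1)).comap (LinearMap.mulLeft k b) :=
      D.Fp_succ_le.2 fun x hx a ha => by
        rw [Submodule.mem_comap, LinearMap.mulLeft_apply, ← mul_assoc, D.mul_odd (D.pe_X hx),
          mul_assoc]
        exact D.mul_mem_Fp_succ hx (ih ha _)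
    exact this ha

lemma mul_mem_Fp {r s : ℕ} {a b : H.carrier} (ha : a ∈ D.Fp r) (hb : b ∈ D.Fp s) :
    a * b ∈ D.Fp (s + r) := by
  induction r generalizing a with
  | zero => exact D.mul_mem_Fp_left hb a
  | succ r ih =>
    have : D.Fp (r + 1) ≤ (D.Fp (s + r + 1)).comap (LinearMap.mulRight k b) :=
      D.Fp_succ_le.2 fun x hx a ha => by
        rw [Submodule.mem_comap, LinearMap.mulRight_apply, mul_assoc]
        exact D.mul_mem_Fp_succ hx (ih ha)
    exact this ha

lemma Fp_anti_succ (r : ℕ) : D.Fp (r + 1) ≤ D.Fp r :=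
  D.Fp_succ_le.2 fun _ _ _ ha => D.mul_mem_Fp_left ha _

lemma Fp_anti {r s : ℕ} (h : r ≤ s) : D.Fp s ≤ D.Fp r := antitone_nat_of_succ_le D.Fp_anti_succ h

lemma Fp_eq (r : ℕ) : D.Fp r = D.X ^ r * ⊤ := by
  induction r with
  | zero => rw [pow_zero, one_mul]; rfl
  | succ r ih => rw [pow_succ', mul_assoc, ← ih]; rfl

/-- Finitely many odd elements generate a nilpotent ideal. -/
lemma exists_pow_eq_bot (D : H.OddDatum) (s : Finset H.carrier) (hs : ∀ x ∈ s, H.pe x = 0) :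
    ∃ m, (Submodule.span k (s : Set H.carrier)) ^ m = ⊥ := by
  classical
  induction s using Finset.induction_on with
  | empty => exact ⟨1, by simp⟩
  | insert x s _ ih =>
    obtain ⟨m, hm⟩ := ih fun y hy => hs y (Finset.mem_insert_of_mem hy)
    have hx : H.pe x = 0 := hs x (Finset.mem_insert_self x s)
    set Y := Submodule.span k (s : Set H.carrier) with hY
    have hsq : (k ∙ x) * (k ∙ x) = ⊥ := by
      rw [Submodule.span_mul_span, Set.singleton_mul_singleton, D.sq_odd hx]; simp
    have hcomm : Y * (k ∙ x) ≤ (k ∙ x) * Y := by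
      refine Submodule.mul_le.2 fun y hy z hz => ?_
      have hy' : H.pe y = 0 := by
        have : Y ≤ LinearMap.ker H.pe :=
          Submodule.span_le.2 fun y hy => hs y (Finset.mem_insert_of_mem hy)
        exact this hy
      obtain ⟨c, rfl⟩ := Submodule.mem_span_singleton.1 hz
      rw [mul_smul_comm, D.comm.2 y x hy' hx]
      exact Submodule.smul_mem _ _ (neg_mem
        (Submodule.mul_mem_mul (Submodule.mem_span_singleton_self x) hy))
    have key : ∀ n, ((k ∙ x) ⊔ Y) ^ (n + 1) ≤ Y ^ (n + 1) ⊔ (k ∙ x) * Y ^ n := by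
      intro n
      induction n with
      | zero => simp [sup_comm]
      | succ n ihn =>
        rw [pow_succ']
        refine (mul_le_mul' le_rfl ihn).trans ?_
        rw [Submodule.sup_mul, Submodule.mul_sup, Submodule.mul_sup, ← mul_assoc (k ∙ x), hsq,
          Submodule.bot_mul, ← pow_succ', ← mul_assoc Y]
        refine sup_le (sup_le le_sup_right bot_le) (sup_le le_sup_left ?_)
        refine (mul_le_mul' hcomm le_rfl).trans ?_
        rw [mul_assoc, ← pow_succ']
        exact le_sup_right
    refine ⟨m + 1, ?_⟩
    rw [Finset.coe_insert, Submodule.span_insert, eq_bot_iff]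
    refine (key m).trans ?_
    rw [pow_succ, hm]
    simp

lemma exists_Fp_eq_bot : ∃ m, D.Fp m = ⊥ := by
  have := D.fd
  have hfd : FiniteDimensional k D.X := Submodule.finiteDimensional_of_le (S₂ := D.C) inf_le_left
  obtain ⟨s, hs⟩ := (Module.Finite.iff_fg.1 hfd : D.X.FG)
  obtain ⟨m, hm⟩ := D.exists_pow_eq_bot s fun x hx =>
    D.pe_X (hs ▸ Submodule.subset_span hx)
  exact ⟨m, by rw [Fp_eq, ← hs, hm, Submodule.bot_mul]⟩

/-! #### The coproduct and the filtration `Fp` -/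

/-- A functional vanishing on `Fp (m + 1)` lowers the filtration by at most `m`. -/
lemma coh_mem_Fp (n : ℕ) : ∀ r m, r + m = n → ∀ ζ : H.carrier →ₗ[k] k,
    (∀ a ∈ D.Fp (m + 1), ζ a = 0) → ∀ y ∈ D.Fp n, H.coh ζ y ∈ D.Fp r := by
  induction n with
  | zero =>
    intro r m h ζ _ y _
    obtain rfl : r = 0 := by omega
    exact D.mem_Fp_zero _
  | succ n ih =>
    intro r m h ζ hζ y hy
    obtain _ | r := r
    · exact D.mem_Fp_zero _
    have : D.Fp (n + 1) ≤ (D.Fp (r + 1)).comap (H.coh ζ) := by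
      refine D.Fp_succ_le.2 fun x hx a ha => ?_
      rw [Submodule.mem_comap, coh_mul]
      have hle : H.tens D.X D.E ⊔ H.tens D.E D.X ≤ (D.Fp (r + 1)).comap
          (H.evL ζ ∘ₗ H.sm.flip (H.comul a)) := by
        refine sup_le (tens_le.2 fun e he f hf => ?_) (tens_le.2 fun e he f hf => ?_)
        · rw [Submodule.mem_comap, LinearMap.comp_apply, LinearMap.flip_apply, evL_sm]
          obtain _ | m := m
          · have h0 : ∀ g : H.carrier →ₗ[k] H.carrier, ζ ∘ₗ LinearMap.mulLeft k e ∘ₗ g = 0 := by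
              intro g
              ext b
              exact hζ _ (D.mul_mem_Fp_succ he (D.mem_Fp_zero _))
            rw [h0, h0]
            simp [evL]
          · refine add_mem (D.mul_mem_Fp_left (ih (r + 1) m (by omega) _ ?_ a ha) _)
              (D.mul_mem_Fp_left (ih (r + 1) m (by omega) _ ?_ a ha) _)
            · exact fun b hb => hζ _ (D.mul_mem_Fp_succ he (D.pe_mem_Fp hb))
            · exact fun b hb => hζ _ (D.mul_mem_Fp_succ he (D.po_mem_Fp hb))
        · rw [Submodule.mem_comap, LinearMap.comp_apply, LinearMap.flip_apply, evL_sm,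
            H.par_odd (D.pe_X hf)]
          refine add_mem (D.mul_mem_Fp_succ hf (ih r m (by omega) _ ?_ a ha))
              (D.mul_mem_Fp_succ (neg_mem hf) (ih r m (by omega) _ ?_ a ha))
          · exact fun b hb => hζ _ (D.mul_mem_Fp_left (D.pe_mem_Fp hb) _)
          · exact fun b hb => hζ _ (D.mul_mem_Fp_left (D.po_mem_Fp hb) _)
      exact hle (D.comul_X hx)
    exact this hy

end OddDatum

end HopfSuperalgebra

namespace HopfSuperalgebra

namespace OddDatum

variable {k : Type} [Field k] {H : HopfSuperalgebra k} (D : OddDatum H)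

/-! ### Coinvariant generators of the ideal modulo its square -/

lemma kap_E {e : H.carrier} (he : e ∈ D.E) : H.kap e ∈ D.Fp 1 := by
  have hle : H.tens D.X D.X ≤ (D.Fp 1).comap
      (LinearMap.mul' k _ ∘ₗ TensorProduct.map H.antipode LinearMap.id) :=
    tens_le.2 fun x _ y hy => by simpa using D.mul_mem_Fp_left (D.X_le_F hy) _
  have := hle (D.po_comul_E he)
  rw [Submodule.mem_comap, LinearMap.comp_apply, ← LinearMap.comp_apply (TensorProduct.map _ _),
    ← TensorProduct.map_comp] at this
  exact this

lemma kap_X {x : H.carrier} (hx : x ∈ D.X) : H.kap x ∈ D.Fp 1 := by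
  have hle : H.tens D.E D.X ≤ (D.Fp 1).comap
      (LinearMap.mul' k _ ∘ₗ TensorProduct.map H.antipode LinearMap.id) :=
    tens_le.2 fun x _ y hy => by simpa using D.mul_mem_Fp_left (D.X_le_F hy) _
  have h1 := hle (D.pe_comul_X hx)
  rw [Submodule.mem_comap] at h1
  have h2 := congrArg (LinearMap.mul' k _ ∘ₗ TensorProduct.map H.antipode LinearMap.id)
    (pe_add_po_comul (H := H) (H.comul x))
  rw [map_add, LinearMap.comp_apply, LinearMap.comp_apply, LinearMap.comp_apply,
    H.antipode_comul' x, H.counit_odd x (D.pe_X hx), zero_smul] at h2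
  have h3 : H.kap x = LinearMap.mul' k _ (TensorProduct.map H.antipode LinearMap.id
      (TensorProduct.map H.po LinearMap.id (H.comul x))) := by
    rw [← LinearMap.comp_apply (TensorProduct.map _ _), ← TensorProduct.map_comp]
    rfl
  rw [h3, eq_neg_of_add_eq_zero_right h2]
  exact neg_mem h1

lemma antipode_X {x : H.carrier} (hx : x ∈ D.X) : H.antipode x ∈ D.Fp 1 := by
  have hle : H.tens D.X D.E ⊔ H.tens D.E D.X ≤ (D.Fp 1).comap
      (H.mulS ∘ₗ TensorProduct.map H.kap LinearMap.id) := by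
    refine sup_le (tens_le.2 fun x hx y _ => ?_) (tens_le.2 fun x hx y _ => ?_)
    · simpa using D.mul_mem_Fp_right (D.kap_X hx) _
    · simpa using D.mul_mem_Fp_right (D.kap_E hx) _
  have := hle (D.comul_X hx)
  rwa [Submodule.mem_comap, LinearMap.comp_apply, mulS_kap, D.po_X hx] at this

/-- The ideal generated by `X` is stable under the antipode. -/
lemma antipode_F {a : H.carrier} (ha : a ∈ D.Fp 1) : H.antipode a ∈ D.Fp 1 := by
  have : D.Fp 1 ≤ (D.Fp 1).comap H.antipode := D.Fp_succ_le.2 fun x hx a _ => by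
    rw [Submodule.mem_comap, H.antipode_odd_mul (D.pe_X hx)]
    exact D.mul_mem_Fp_left (D.antipode_X hx) _
  exact this ha

lemma sm_mem_right {t : H.carrier ⊗[k] H.carrier} (ht : t ∈ H.tens ⊤ D.X)
    (u : H.carrier ⊗[k] H.carrier) : H.sm t u ∈ H.tens ⊤ (D.Fp 1) := by
  have : H.tens ⊤ D.X ≤ (H.tens ⊤ (D.Fp 1)).comap (H.sm.flip u) := by
    refine tens_le.2 fun x _ y hy => ?_
    rw [Submodule.mem_comap, LinearMap.flip_apply]
    induction u with
    | zero => simp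
    | add u v hu hv => rw [map_add]; exact add_mem hu hv
    | tmul u v =>
      rw [sm_tmul, H.par_odd (D.pe_X hy)]
      exact add_mem (tmul_mem_tens Submodule.mem_top (D.mul_mem_Fp_right (D.X_le_F hy) _))
        (tmul_mem_tens Submodule.mem_top (D.mul_mem_Fp_right (neg_mem (D.X_le_F hy)) _))
  exact this ht

lemma sm_mem_left {t : H.carrier ⊗[k] H.carrier} (ht : t ∈ H.tens D.X ⊤)
    (u : H.carrier ⊗[k] H.carrier) : H.sm t u ∈ H.tens (D.Fp 1) ⊤ := by
  have : H.tens D.X ⊤ ≤ (H.tens (D.Fp 1) ⊤).comap (H.sm.flip u) := by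
    refine tens_le.2 fun x hx y _ => ?_
    rw [Submodule.mem_comap, LinearMap.flip_apply]
    induction u with
    | zero => simp
    | add u v hu hv => rw [map_add]; exact add_mem hu hv
    | tmul u v =>
      rw [sm_tmul]
      exact add_mem (tmul_mem_tens (D.mul_mem_Fp_right (D.X_le_F hx) _) Submodule.mem_top)
        (tmul_mem_tens (D.mul_mem_Fp_right (D.X_le_F hx) _) Submodule.mem_top)
  exact this ht

/-- The image of `X` under the projection onto coinvariants. -/
def Y : Submodule k H.carrier := D.X.map H.coinv

lemma coinv_X_mem {x : H.carrier} (hx : x ∈ D.X) : H.coinv x ∈ D.Fp 1 := by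
  have hle : H.tens D.X D.E ≤ (D.Fp 1).comap H.mulS :=
    tens_le.2 fun x hx y _ => by simpa using D.mul_mem_Fp_right (D.X_le_F hx) _
  exact hle (D.po_comul_X hx)

lemma coinv_E_mem {x : H.carrier} (hx : x ∈ D.E) : H.coinv x ∈ D.Fp 1 := by
  have hle : H.tens D.X D.X ≤ (D.Fp 1).comap H.mulS :=
    tens_le.2 fun x hx y _ => by simpa using D.mul_mem_Fp_right (D.X_le_F hx) _
  exact hle (D.po_comul_E hx)

lemma Y_le_F : D.Y ≤ D.Fp 1 := by
  rintro _ ⟨x, hx, rfl⟩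
  exact D.coinv_X_mem hx

lemma pe_Y {y : H.carrier} (hy : y ∈ D.Y) : H.pe y = 0 := by
  obtain ⟨x, hx, rfl⟩ := hy
  have hle : H.tens D.X D.E ≤ (LinearMap.ker H.pe).comap H.mulS :=
    tens_le.2 fun x hx y hy => by
      rw [Submodule.mem_comap, mulS_tmul, LinearMap.mem_ker, pe_mul, D.pe_X hx, ← antipode_po,
        D.po_E hy]
      simp
  exact hle (D.po_comul_X hx)

/-- `X` is contained in the ideal generated by `Y`, up to the square of the ideal. -/
lemma X_le : D.X ≤ D.Y * ⊤ ⊔ D.Fp 2 := by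
  intro x hx
  have hle : H.tens D.X D.E ⊔ H.tens D.E D.X ≤ (D.Y * ⊤ ⊔ D.Fp 2).comap
      (LinearMap.mul' k _ ∘ₗ TensorProduct.map H.coinv LinearMap.id) := by
    refine sup_le (tens_le.2 fun x hx y _ => ?_) (tens_le.2 fun x hx y hy => ?_)
    · exact Submodule.mem_sup_left (Submodule.mul_mem_mul ⟨x, hx, rfl⟩ Submodule.mem_top)
    · exact Submodule.mem_sup_right (D.mul_mem_Fp (D.coinv_E_mem hx) (D.X_le_F hy))
  have := hle (D.comul_X hx)
  rwa [Submodule.mem_comap, LinearMap.comp_apply, mul_coinv, D.po_X hx] at this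

/-- The elements of `Y` are coinvariant modulo the ideal. -/
lemma comul_Y {y : H.carrier} (hy : y ∈ D.Y) :
    H.comul y - y ⊗ₜ[k] 1 ∈ H.tens ⊤ (D.Fp 1) := by
  obtain ⟨x, hx, rfl⟩ := hy
  rw [← coinv_tmul_one]
  set Ψ := TensorProduct.lift (H.sm.compl₁₂ (TensorProduct.map H.po LinearMap.id ∘ₗ H.comul)
      (H.comul ∘ₗ H.antipode)) with hΨ
  have hle : H.tens D.X D.E ⊔ H.tens D.E D.X ≤ (H.tens ⊤ (D.Fp 1)).comap
      (H.comul ∘ₗ H.mulS ∘ₗ TensorProduct.map H.po LinearMap.id - Ψ) := by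
    refine sup_le (tens_le.2 fun a ha b _ => ?_) (tens_le.2 fun a ha b _ => ?_)
    · have h1 : H.comul a - TensorProduct.map H.po LinearMap.id (H.comul a) =
          TensorProduct.map H.pe LinearMap.id (H.comul a) := by
        rw [sub_eq_iff_eq_add, pe_add_po_comul]
      rw [Submodule.mem_comap, LinearMap.sub_apply, LinearMap.comp_apply, LinearMap.comp_apply,
        TensorProduct.map_tmul, LinearMap.id_apply, mulS_tmul, D.po_X ha, comul_mul', hΨ,
        TensorProduct.lift.tmul, LinearMap.compl₁₂_apply, LinearMap.comp_apply,
        LinearMap.comp_apply, ← LinearMap.sub_apply, ← map_sub, h1]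
      exact D.sm_mem_right (tens_mono le_top le_rfl (D.pe_comul_X ha)) _
    · rw [Submodule.mem_comap, LinearMap.sub_apply, LinearMap.comp_apply, LinearMap.comp_apply,
        TensorProduct.map_tmul, LinearMap.id_apply, mulS_tmul, D.po_E ha, zero_mul, map_zero,
        zero_sub, hΨ, TensorProduct.lift.tmul, LinearMap.compl₁₂_apply, LinearMap.comp_apply,
        LinearMap.comp_apply]
      exact neg_mem (D.sm_mem_right (tens_mono le_top le_rfl (D.po_comul_E ha)) _)
  exact hle (D.comul_X hx)

/-- The subspace `F·A⁺` where `A⁺` is the augmentation ideal. -/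
def K : Submodule k H.carrier := D.X * LinearMap.ker H.counit

lemma mul_mem_K {x a : H.carrier} (hx : x ∈ D.X) (ha : H.counit a = 0) : x * a ∈ D.K :=
  Submodule.mul_mem_mul hx ha

lemma counit_F {a : H.carrier} (ha : a ∈ D.Fp 1) : H.counit a = 0 := by
  have : D.Fp 1 ≤ LinearMap.ker H.counit := D.Fp_succ_le.2 fun x hx a _ => by
    rw [LinearMap.mem_ker, H.counit_mul, H.counit_odd x (D.pe_X hx), zero_mul]
  exact this ha

lemma Fp_two_le_K : D.Fp 2 ≤ D.K :=
  D.Fp_succ_le.2 fun _ hx _ ha => D.mul_mem_K hx (D.counit_F ha)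

lemma K_le_F : D.K ≤ D.Fp 1 := Submodule.mul_le.2 fun _ hx _ _ =>
  D.mul_mem_Fp_right (D.X_le_F hx) _

/-- The coinvariants meet `F·A⁺` only in the square of the ideal. -/
lemma Y_inf_K {w : H.carrier} (hY : w ∈ D.Y) (hK : w ∈ D.K) : w ∈ D.Fp 2 := by
  have key : ∀ v ∈ D.K, ∃ u ∈ H.tens (D.Fp 1) ⊤, H.mulS u = 0 ∧
      H.comul v - u ∈ H.tens ⊤ (D.Fp 1) := by
    intro v hv
    induction hv using Submodule.mul_induction_on' with
    | mem_mul_mem x hx a ha =>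
      refine ⟨H.sm (TensorProduct.map H.po LinearMap.id (H.comul x)) (H.comul a), ?_, ?_, ?_⟩
      · exact D.sm_mem_left (tens_mono le_rfl le_top (D.po_comul_X hx)) _
      · generalize H.comul x = t
        induction t with
        | zero => simp
        | add t s ht hs => simp only [map_add, LinearMap.add_apply, ht, hs, add_zero]
        | tmul p q =>
          rw [TensorProduct.map_tmul, LinearMap.id_apply,
            show H.po p ⊗ₜ[k] q = (H.po p ⊗ₜ 1) * (1 ⊗ₜ q) by simp, sm_one_left_mul,
            mulS_left_mul, mulS_sm, show H.counit a = 0 from ha, zero_smul, mul_zero]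
      · have h1 : H.comul x - TensorProduct.map H.po LinearMap.id (H.comul x) =
            TensorProduct.map H.pe LinearMap.id (H.comul x) := by
          rw [sub_eq_iff_eq_add, pe_add_po_comul]
        rw [comul_mul', ← LinearMap.sub_apply, ← map_sub, h1]
        exact D.sm_mem_right (tens_mono le_top le_rfl (D.pe_comul_X hx)) _
    | add v _ v' _ h h' =>
      obtain ⟨u, h1, h2, h3⟩ := h
      obtain ⟨u', h1', h2', h3'⟩ := h'
      refine ⟨u + u', add_mem h1 h1', by rw [map_add, h2, h2', add_zero], ?_⟩
      rw [map_add, add_sub_add_comm]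
      exact add_mem h3 h3'
  obtain ⟨u, h1, h2, h3⟩ := key w hK
  have h4 : w ⊗ₜ[k] 1 - u ∈ H.tens ⊤ (D.Fp 1) := by
    have := sub_mem h3 (D.comul_Y hY)
    rwa [sub_sub_sub_cancel_left] at this
  have h5 : w ⊗ₜ[k] 1 - u ∈ H.tens (D.Fp 1) ⊤ :=
    sub_mem (tmul_mem_tens (D.Y_le_F hY) Submodule.mem_top) h1
  have h6 : w ⊗ₜ[k] 1 - u ∈ H.tens (D.Fp 1) (D.Fp 1) :=
    H.range_map_le_tens _ _ (mem_range_of_slices _ _ _ (fun β => H.evR_mem_of_tens h5 β)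
      (fun α => H.evL_mem_of_tens h4 α))
  have hle : H.tens (D.Fp 1) (D.Fp 1) ≤ (D.Fp 2).comap H.mulS := tens_le.2 fun x hx y hy => by
    rw [Submodule.mem_comap, mulS_tmul]
    exact D.mul_mem_Fp hx (D.antipode_F hy)
  have := hle h6
  rwa [Submodule.mem_comap, map_sub, h2, mulS_tmul, antipode_one, mul_one, sub_zero] at this

end OddDatum

end HopfSuperalgebra

namespace HopfSuperalgebra

namespace OddDatum

variable {k : Type} [Field k] {H : HopfSuperalgebra k} (D : OddDatum H)

/-! ### Odd coordinates and point derivations -/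

/-- Elements `w i` freely generating the ideal `F = Fp 1` modulo its square at the unit, which are
coinvariant modulo `F`, together with dual odd functionals `ξ i` vanishing on `F·A⁺`. -/
structure Coords where
  I : Type
  [fin : Fintype I]
  [dec : DecidableEq I]
  w : I → H.carrier
  ξ : I → H.carrier →ₗ[k] k
  w_odd : ∀ i, H.pe (w i) = 0
  w_F : ∀ i, w i ∈ D.Fp 1
  comul_w : ∀ i, H.comul (w i) - w i ⊗ₜ[k] 1 ∈ H.tens ⊤ (D.Fp 1)
  gen : D.Fp 1 ≤ Submodule.span k (Set.range w) * ⊤ ⊔ D.Fp 2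
  ξ_pe : ∀ i a, ξ i (H.pe a) = 0
  ξ_K : ∀ i, ∀ a ∈ D.K, ξ i a = 0
  ξ_w : ∀ i j, ξ i (w j) = if i = j then 1 else 0

attribute [instance] Coords.fin Coords.dec

lemma po_mem_K {a : H.carrier} (ha : a ∈ D.K) : H.po a ∈ D.K := by
  have : D.K ≤ D.K.comap H.po := Submodule.mul_le.2 fun x hx c hc => by
    rw [Submodule.mem_comap, po_mul, D.pe_X hx, zero_mul, zero_add, D.po_X hx]
    refine D.mul_mem_K hx ?_
    rw [pe_eq, map_sub, counit_po, LinearMap.mem_ker.1 hc, sub_zero]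
  exact this ha

lemma exists_coords : Nonempty D.Coords := by
  classical
  have := D.fd
  have hX : FiniteDimensional k D.X := Submodule.finiteDimensional_of_le (S₂ := D.C) inf_le_left
  have hY : FiniteDimensional k D.Y := by unfold Y; infer_instance
  obtain ⟨Z', hZ'⟩ := Submodule.exists_isCompl (D.K.comap D.Y.subtype)
  set Z : Submodule k H.carrier := Z'.map D.Y.subtype with hZ
  have hZY : Z ≤ D.Y := Submodule.map_subtype_le _ _
  have hZfd : FiniteDimensional k Z := Submodule.finiteDimensional_of_le hZY
  have hZK : ∀ z ∈ Z, z ∈ D.K → z = 0 := by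
    rintro _ ⟨z, hz, rfl⟩ hK
    have := (Submodule.disjoint_def.1 hZ'.disjoint) z hK hz
    simp [this]
  have hYle : D.Y ≤ Z ⊔ D.Fp 2 := by
    intro y hy
    have : (⟨y, hy⟩ : D.Y) ∈ D.K.comap D.Y.subtype ⊔ Z' := by
      rw [hZ'.sup_eq_top]; exact Submodule.mem_top
    obtain ⟨a, ha, b, hb, hab⟩ := Submodule.mem_sup.1 this
    have h2 : y = (b : H.carrier) + a := by
      have := congrArg Subtype.val hab
      simpa [add_comm] using this.symm
    rw [h2]
    exact Submodule.add_mem_sup (Submodule.mem_map_of_mem hb) (D.Y_inf_K a.2 ha)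
  set Q : Submodule k H.carrier := D.K ⊔ LinearMap.range H.pe with hQ
  have hinj : LinearMap.ker (Q.mkQ ∘ₗ Z.subtype) = ⊥ := by
    refine LinearMap.ker_eq_bot'.2 fun z hz => ?_
    have hz' : (z : H.carrier) ∈ Q := by simpa using hz
    obtain ⟨κ, hκ, _, ⟨a, rfl⟩, hs⟩ := Submodule.mem_sup.1 hz'
    have hodd := D.pe_Y (hZY z.2)
    have h1 : (z : H.carrier) = H.po κ := by
      rw [← H.po_of_odd hodd, ← hs, map_add, H.po_pe, add_zero]
    exact Subtype.ext (hZK _ z.2 (h1 ▸ D.po_mem_K hκ))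
  obtain ⟨g, hg⟩ := LinearMap.exists_leftInverse_of_injective _ hinj
  set b := Module.finBasis k Z with hb
  have hspan : Submodule.span k (Set.range fun i => (b i : H.carrier)) = Z := by
    rw [show (Set.range fun i => (b i : H.carrier)) = Z.subtype '' Set.range b by
      rw [← Set.range_comp]; rfl, Submodule.span_image, b.span_eq, Submodule.map_top,
      Submodule.range_subtype]
  refine ⟨{
    I := Fin (Module.finrank k Z)
    w := fun i => b i
    ξ := fun i => b.coord i ∘ₗ g ∘ₗ Q.mkQ
    w_odd := fun i => D.pe_Y (hZY (b i).2)
    w_F := fun i => D.Y_le_F (hZY (b i).2)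
    comul_w := fun i => D.comul_Y (hZY (b i).2)
    gen := ?_
    ξ_pe := ?_
    ξ_K := ?_
    ξ_w := ?_ }⟩
  · rw [hspan]
    refine D.Fp_succ_le.2 fun x hx a _ => ?_
    obtain ⟨u, hu, v, hv, rfl⟩ := Submodule.mem_sup.1 (D.X_le hx)
    rw [add_mul]
    refine add_mem ?_ (Submodule.mem_sup_right (D.mul_mem_Fp_right hv a))
    have : D.Y * ⊤ ≤ (Z * ⊤ ⊔ D.Fp 2).comap (LinearMap.mulRight k a) := by
      refine Submodule.mul_le.2 fun y hy c _ => ?_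
      obtain ⟨z, hz, f, hf, rfl⟩ := Submodule.mem_sup.1 (hYle hy)
      rw [Submodule.mem_comap, LinearMap.mulRight_apply, mul_assoc, add_mul]
      exact Submodule.add_mem_sup (Submodule.mul_mem_mul hz Submodule.mem_top)
        (D.mul_mem_Fp_right hf _)
    exact this hu
  · intro i a
    have : Q.mkQ (H.pe a) = 0 := by
      simpa using (Submodule.mem_sup_right ⟨a, rfl⟩ : H.pe a ∈ Q)
    rw [LinearMap.comp_apply, LinearMap.comp_apply, this, map_zero, map_zero]
  · intro i a ha
    have : Q.mkQ a = 0 := by simpa using (Submodule.mem_sup_left ha : a ∈ Q)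
    rw [LinearMap.comp_apply, LinearMap.comp_apply, this, map_zero, map_zero]
  · intro i j
    have : g (Q.mkQ (b j : H.carrier)) = b j := LinearMap.congr_fun hg (b j)
    rw [LinearMap.comp_apply, LinearMap.comp_apply, this, Module.Basis.coord_apply,
      Module.Basis.repr_self, Finsupp.single_apply]
    simp only [eq_comm]

namespace Coords

variable {D} (c : D.Coords)

lemma ξ_Fp_two (i : c.I) {a : H.carrier} (ha : a ∈ D.Fp 2) : c.ξ i a = 0 :=
  c.ξ_K i a (D.Fp_two_le_K ha)

lemma ξ_one (i : c.I) : c.ξ i 1 = 0 := by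
  have := c.ξ_pe i 1
  rwa [H.pe_of_even H.one_even] at this

lemma ξ_po (i : c.I) (a : H.carrier) : c.ξ i (H.po a) = c.ξ i a := by
  rw [po_eq, map_sub, c.ξ_pe, sub_zero]

/-- `ξ i` is a point derivation at the unit on the ideal `F`. -/
lemma ξ_mul (i : c.I) {f : H.carrier} (hf : f ∈ D.Fp 1) (a : H.carrier) :
    c.ξ i (f * a) = H.counit a * c.ξ i f := by
  have hX : ∀ x ∈ D.X, ∀ b, c.ξ i (x * b) = H.counit b * c.ξ i x := by
    intro x hx b
    have := c.ξ_K i _ (D.mul_mem_K hx (a := b - H.counit b • 1) (by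
      rw [map_sub, map_smul, H.counit_one, smul_eq_mul, mul_one, sub_self]))
    rw [mul_sub, mul_smul_comm, mul_one, map_sub, map_smul, sub_eq_zero] at this
    exact this
  have : D.Fp 1 ≤ LinearMap.ker (c.ξ i ∘ₗ LinearMap.mulRight k a - H.counit a • c.ξ i) :=
    D.Fp_succ_le.2 fun x hx b _ => by
      rw [LinearMap.mem_ker]
      simp only [LinearMap.sub_apply, LinearMap.comp_apply, LinearMap.mulRight_apply,
        LinearMap.smul_apply, smul_eq_mul]
      rw [mul_assoc, hX x hx, hX x hx, H.counit_mul]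
      ring
  have := this hf
  rw [LinearMap.mem_ker] at this
  simpa [sub_eq_zero] using this

lemma ξ_mul' (i : c.I) {f : H.carrier} (hf : f ∈ D.Fp 1) (a : H.carrier) :
    c.ξ i (a * f) = H.counit a * c.ξ i f := by
  have h1 : c.ξ i (a * H.po f) = H.counit a * c.ξ i f := by
    rw [D.mul_odd (H.pe_po f), c.ξ_mul i (D.po_mem_Fp hf), counit_par, c.ξ_po]
  have h2 : c.ξ i (a * H.pe f) = 0 := by
    rw [← D.comm.1 (H.pe f) a (H.po_pe f), c.ξ_mul i (D.pe_mem_Fp hf), c.ξ_pe, mul_zero]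
  rw [← H.pe_add_po f, mul_add, map_add, h1, h2, zero_add, H.pe_add_po]

/-- On the filtration, the operator `H.coh (ξ i)` is an odd derivation modulo higher terms. -/
lemma coh_w_mul (i j : c.I) (n : ℕ) {y : H.carrier} (hy : y ∈ D.Fp n) :
    H.coh (c.ξ j) (c.w i * y) - ((if j = i then (1 : k) else 0) • y - c.w i * H.coh (c.ξ j) y) ∈
      D.Fp (n + 1) := by
  have key : H.tens ⊤ (D.Fp 1) ≤ (D.Fp (n + 1)).comap
      (H.evL (c.ξ j) ∘ₗ H.sm.flip (H.comul y) -
        LinearMap.mulRight k (H.coh (c.ξ j) y) ∘ₗ H.par ∘ₗ H.evL H.counit) := by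
    refine tens_le.2 fun e _ f hf => ?_
    rw [Submodule.mem_comap, LinearMap.sub_apply, LinearMap.comp_apply, LinearMap.flip_apply,
      evL_sm, LinearMap.comp_apply, LinearMap.comp_apply, evL_tmul, LinearMap.mulRight_apply]
    have h1 : H.coh (c.ξ j ∘ₗ LinearMap.mulLeft k e ∘ₗ H.pe) y ∈ D.Fp n :=
      D.coh_mem_Fp n n 0 rfl _ (fun b hb => by
        simp only [LinearMap.comp_apply, LinearMap.mulLeft_apply]
        rw [c.ξ_mul' j (D.pe_mem_Fp hb), c.ξ_pe, mul_zero]) y hy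
    have h2 : H.coh (c.ξ j ∘ₗ LinearMap.mulLeft k e ∘ₗ H.po - H.counit e • c.ξ j) y ∈ D.Fp n :=
      D.coh_mem_Fp n n 0 rfl _ (fun b hb => by
        simp only [LinearMap.comp_apply, LinearMap.mulLeft_apply, LinearMap.sub_apply,
          LinearMap.smul_apply, smul_eq_mul]
        rw [c.ξ_mul' j (D.po_mem_Fp hb), c.ξ_po, sub_self]) y hy
    have h3 := add_mem (D.mul_mem_Fp hf h1) (D.mul_mem_Fp (D.par_mem_Fp hf) h2)
    rw [coh_sub, coh_smul, mul_sub, mul_smul_comm] at h3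
    rw [map_smul, smul_mul_assoc]
    convert h3 using 1
    rw [← add_sub_assoc]
    rfl
  have h := key (c.comul_w i)
  have h0 : H.counit (c.w i) = 0 := H.counit_odd _ (c.w_odd i)
  have hε : H.evL H.counit (H.comul (c.w i)) = c.w i := H.counit_comul (c.w i)
  rw [Submodule.mem_comap, LinearMap.sub_apply, LinearMap.comp_apply, LinearMap.flip_apply,
    map_sub, LinearMap.sub_apply, map_sub, ← coh_mul, evL_sm, LinearMap.comp_apply,
    LinearMap.comp_apply, map_sub, hε, evL_tmul, h0, zero_smul, sub_zero, H.par_odd (c.w_odd i),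
    LinearMap.mulRight_apply] at h
  convert h using 1
  have hw : H.evL (c.ξ j ∘ₗ LinearMap.mulLeft k (c.w i) ∘ₗ H.pe) (H.comul y) +
      H.evL (c.ξ j ∘ₗ LinearMap.mulLeft k (c.w i) ∘ₗ H.po) (H.comul y) =
      (if j = i then (1 : k) else 0) • y := by
    have e1 : c.ξ j ∘ₗ LinearMap.mulLeft k (c.w i) ∘ₗ H.pe +
        c.ξ j ∘ₗ LinearMap.mulLeft k (c.w i) ∘ₗ H.po =
        (if j = i then (1 : k) else 0) • H.counit := by
      ext b
      simp only [LinearMap.add_apply, LinearMap.comp_apply, LinearMap.mulLeft_apply,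
        LinearMap.smul_apply, smul_eq_mul]
      rw [← map_add, ← mul_add, H.pe_add_po, c.ξ_mul j (c.w_F i), c.ξ_w, mul_comm]
    have e2 := H.coh_add (c.ξ j ∘ₗ LinearMap.mulLeft k (c.w i) ∘ₗ H.pe)
      (c.ξ j ∘ₗ LinearMap.mulLeft k (c.w i) ∘ₗ H.po) y
    rw [e1, coh_smul, coh_counit] at e2
    exact e2.symm
  rw [H.par_even H.one_even, one_mul, one_mul, hw]
  simp only [neg_mul]
  abel

/-- The functionals `ξ i` detect membership in the next step of the filtration. -/
lemma mem_Fp_succ {r : ℕ} (hr : 1 ≤ r) {y : H.carrier} (hy : y ∈ D.Fp r)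
    (hd : ∀ j, H.coh (c.ξ j) y ∈ D.Fp r) : y ∈ D.Fp (r + 1) := by
  -- `P` runs through the products of distinct `w i`, `S` through the indices already used.
  have key : ∀ (T S : Finset c.I) (m : ℕ) (P : H.carrier), (∀ i, i ∈ S ∨ i ∈ T) → P ∈ D.Fp m →
      (∀ i ∈ S, c.w i * P = 0) → P * y ∈ D.Fp (m + r) →
      (∀ j, j ∉ S → H.coh (c.ξ j) (P * y) ∈ D.Fp (m + r)) → P * y ∈ D.Fp (m + r + 1) := by
    intro T
    induction T using Finset.induction_on with
    | empty =>
      intro S m P hS hP hw _ _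
      have hwP : ∀ i, c.w i * P = 0 := fun i => hw i (by simpa using hS i)
      obtain ⟨r, rfl⟩ : ∃ r', r = r' + 1 := ⟨r - 1, by omega⟩
      have h1 : Submodule.span k (Set.range c.w) * ⊤ ⊔ D.Fp 2 ≤
          (D.Fp (m + 2)).comap (LinearMap.mulLeft k P) := by
        refine sup_le (Submodule.mul_le.2 fun u hu b _ => ?_) fun f hf => ?_
        · have h2 : Submodule.span k (Set.range c.w) ≤ LinearMap.ker (LinearMap.mulLeft k P) := by
            refine Submodule.span_le.2 ?_
            rintro _ ⟨i, rfl⟩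
            have := congrArg H.par (hwP i)
            rw [par_mul, H.par_odd (c.w_odd i), map_zero, neg_mul, neg_eq_zero] at this
            simp [D.mul_odd (c.w_odd i), this]
          have h3 : P * u = 0 := h2 hu
          rw [Submodule.mem_comap, LinearMap.mulLeft_apply, ← mul_assoc, h3, zero_mul]
          exact zero_mem _
        · rw [Submodule.mem_comap, LinearMap.mulLeft_apply, add_comm]
          exact D.mul_mem_Fp hP hf
      have h4 : D.Fp (r + 1) ≤ (D.Fp (m + (r + 1) + 1)).comap (LinearMap.mulLeft k P) := by
        refine D.Fp_succ_le.2 fun x hx a ha => ?_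
        rw [Submodule.mem_comap, LinearMap.mulLeft_apply, ← mul_assoc]
        have h5 : P * x ∈ D.Fp (m + 2) := h1 (c.gen (D.X_le_F hx))
        have := D.mul_mem_Fp h5 ha
        rwa [show r + (m + 2) = m + (r + 1) + 1 by omega] at this
      exact h4 hy
    | insert i T _ ih =>
      intro S m P hS hP hw hPy hdP
      by_cases hi : i ∈ S
      · refine ih S m P (fun j => ?_) hP hw hPy hdP
        rcases hS j with h | h
        · exact Or.inl h
        · rcases Finset.mem_insert.1 h with rfl | h
          · exact Or.inl hi
          · exact Or.inr h
      have h1 : c.w i * P * y ∈ D.Fp (m + 1 + r + 1) := by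
        refine ih (insert i S) (m + 1) (c.w i * P) (fun j => ?_) (D.mul_mem_Fp (c.w_F i) hP)
          (fun j hj => ?_) ?_ fun j hj => ?_
        · rcases hS j with h | h
          · exact Or.inl (Finset.mem_insert_of_mem h)
          · rcases Finset.mem_insert.1 h with rfl | h
            · exact Or.inl (Finset.mem_insert_self _ _)
            · exact Or.inr h
        · rw [← mul_assoc]
          rcases Finset.mem_insert.1 hj with rfl | h
          · rw [D.sq_odd (c.w_odd j), zero_mul]
          · rw [D.comm.2 _ _ (c.w_odd j) (c.w_odd i), neg_mul, mul_assoc, hw j h, mul_zero,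
              neg_zero]
        · rw [mul_assoc, show m + 1 + r = m + r + 1 by omega]
          exact D.mul_mem_Fp (c.w_F i) hPy
        · have hji : j ≠ i := fun h => hj (h ▸ Finset.mem_insert_self _ _)
          have hjS : j ∉ S := fun h => hj (Finset.mem_insert_of_mem h)
          have h2 := c.coh_w_mul i j (m + r) hPy
          rw [if_neg hji, zero_smul, zero_sub, sub_neg_eq_add] at h2
          have h3 := sub_mem h2 (D.mul_mem_Fp (c.w_F i) (hdP j hjS))
          rw [add_sub_cancel_right] at h3
          rwa [mul_assoc, show m + 1 + r = m + r + 1 by omega]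
      have h2 : H.coh (c.ξ i) (c.w i * P * y) ∈ D.Fp (m + r + 1) :=
        D.coh_mem_Fp (m + 1 + r + 1) (m + r + 1) 1 (by omega) _ (fun a ha => c.ξ_Fp_two i ha) _ h1
      have h3 := c.coh_w_mul i i (m + r) hPy
      rw [if_pos rfl, one_smul] at h3
      rw [mul_assoc] at h2
      have h4 := add_mem (sub_mem h2 h3) (D.mul_mem_Fp (c.w_F i) (hdP i hi))
      rwa [sub_sub_cancel, sub_add_cancel] at h4
  have := key Finset.univ ∅ 0 1 (fun i => Or.inr (Finset.mem_univ i)) (D.mem_Fp_zero 1)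
    (by simp) (by simpa using hy) (by simpa using hd)
  simpa using this

end Coords

end OddDatum

end HopfSuperalgebra

namespace HopfSuperalgebra

namespace OddDatum

variable {k : Type} [Field k] {H : HopfSuperalgebra k} (D : OddDatum H)

/-! ### Fixed vectors -/

/-- The functionals vanishing on `k·1 + F`. -/
def NF : Set (H.carrier →ₗ[k] k) := {ν | ν 1 = 0 ∧ ∀ a ∈ D.Fp 1, ν a = 0}

/-- The chain of sets of functionals vanishing on `k·1 + F²`: the first one consists of all of
them, and each further one of the convolution products `ν * α` with `ν ∈ NF` and `α` in the
previous set. -/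
def chain : ℕ → Set (H.carrier →ₗ[k] k)
  | 0 => {α | α 1 = 0 ∧ ∀ a ∈ D.Fp 2, α a = 0}
  | j + 1 => {δ | ∃ ν ∈ D.NF, ∃ α ∈ chain j, δ = ν ∘ₗ H.hit α}

lemma chain_le (j : ℕ) : D.chain j ⊆ D.chain 0 := by
  induction j with
  | zero => exact le_rfl
  | succ j ih =>
    rintro _ ⟨ν, hν, α, hα, rfl⟩
    obtain ⟨h1, h2⟩ := ih hα
    refine ⟨by simp [h1], fun a ha => ?_⟩
    rw [LinearMap.comp_apply, apply_hit]
    exact h2 _ (D.coh_mem_Fp 2 2 0 rfl ν hν.2 a ha)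

/-- The vectors annihilated by `NF`. -/
def fix : Submodule k H.carrier := H.nil D.NF 1

variable {D} in
lemma mem_fix {v : H.carrier} : v ∈ D.fix ↔ ∀ ν ∈ D.NF, H.hit ν v = 0 := by
  rw [fix, mem_nil_succ]; rfl

/-- By double annihilation, the coefficients of a vector of `fix` are constant modulo `F`. -/
lemma coh_sub_mem_F {v : H.carrier} (hv : v ∈ D.fix) (ψ : H.carrier →ₗ[k] k) :
    H.coh ψ v - ψ v • 1 ∈ D.Fp 1 := by
  have h1 : H.coh ψ v ∈ (k ∙ (1 : H.carrier)) ⊔ D.Fp 1 := by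
    by_contra hn
    obtain ⟨ν, h1, h2⟩ := exists_dual_ann hn
    refine h1 ?_
    rw [← apply_hit, mem_fix.1 hv ν ⟨h2 _ (Submodule.mem_sup_left
      (Submodule.mem_span_singleton_self _)), fun a ha => h2 a (Submodule.mem_sup_right ha)⟩,
      map_zero]
  obtain ⟨u, hu, f, hf, huf⟩ := Submodule.mem_sup.1 h1
  obtain ⟨s, rfl⟩ := Submodule.mem_span_singleton.1 hu
  have h2 : s = ψ v := by
    rw [← H.counit_coh ψ v, ← huf, map_add, D.counit_F hf, map_smul, H.counit_one, smul_eq_mul,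
      mul_one, add_zero]
  rw [← huf, ← h2, add_sub_cancel_left]
  exact hf

variable {D} (c : D.Coords)

namespace Coords

lemma coh_w (i j : c.I) : H.coh (c.ξ j) (c.w i) - (if j = i then (1 : k) else 0) • 1 ∈ D.Fp 1 := by
  have := c.coh_w_mul i j 0 (D.mem_Fp_zero 1)
  rwa [mul_one, coh_one, c.ξ_one, zero_smul, mul_zero, sub_zero] at this

/-- On `fix`, every functional killing `k·1 + F²` acts as a combination of the `ξ i`. -/
lemma hit_eq_sum {v : H.carrier} (hv : v ∈ D.fix) {α : H.carrier →ₗ[k] k} (hα : α ∈ D.chain 0) :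
    H.hit α v = ∑ i, α (c.w i) • H.hit (c.ξ i) v := by
  refine dual_ext (k := k) fun ψ => ?_
  have hy : H.coh ψ v - ψ v • 1 - ∑ i, ψ (H.hit (c.ξ i) v) • c.w i ∈ D.Fp 1 :=
    sub_mem (D.coh_sub_mem_F hv ψ) (sum_mem fun i _ => Submodule.smul_mem _ _ (c.w_F i))
  have hy2 := c.mem_Fp_succ le_rfl hy fun j => by
    have h1 := D.coh_sub_mem_F hv (ψ ∘ₗ H.hit (c.ξ j))
    have h2 : ∑ i, ψ (H.hit (c.ξ i) v) •
        (H.coh (c.ξ j) (c.w i) - (if j = i then (1 : k) else 0) • 1) ∈ D.Fp 1 :=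
      sum_mem fun i _ => Submodule.smul_mem _ _ (c.coh_w i j)
    have h3 := sub_mem h1 h2
    convert h3 using 1
    simp only [map_sub, map_smul, map_sum, coh_one, c.ξ_one, zero_smul, smul_zero, sub_zero,
      coh_coh, smul_sub, Finset.sum_sub_distrib, ite_smul, one_smul, smul_ite, Finset.sum_ite_eq,
      Finset.mem_univ, if_true, comp_hit, LinearMap.comp_apply, apply_hit]
    abel
  have h4 := hα.2 _ hy2
  simp only [map_sub, map_smul, map_sum, hα.1, mul_zero, sub_zero, smul_eq_mul] at h4
  rw [apply_hit, sub_eq_zero.1 h4, map_sum]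
  exact Finset.sum_congr rfl fun i _ => by rw [map_smul, smul_eq_mul, mul_comm]

/-- The convolution product of two `ξ`'s vanishes on odd elements. -/
lemma ξ_coh_odd (i j : c.I) {b : H.carrier} (hb : H.pe b = 0) : c.ξ i (H.coh (c.ξ j) b) = 0 := by
  rw [coh, LinearMap.comp_apply, H.comul_odd b hb]
  induction H.comul b with
  | zero => simp
  | add x y hx hy =>
    simp only [map_add] at hx hy ⊢
    rw [add_add_add_comm, hx, hy, add_zero]
  | tmul x y => simp [c.ξ_pe]

/-- The functionals `ξ i` anticommute, up to a functional acting trivially on `fix`. -/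
lemma anticomm_mem_chain (i j : c.I) :
    c.ξ i ∘ₗ H.hit (c.ξ j) + c.ξ j ∘ₗ H.hit (c.ξ i) ∈ D.chain 0 := by
  refine ⟨by simp [c.ξ_one], fun a ha => ?_⟩
  rw [← LinearMap.mem_ker]
  revert a
  have h3 : D.Fp 3 ≤ LinearMap.ker (c.ξ i ∘ₗ H.hit (c.ξ j) + c.ξ j ∘ₗ H.hit (c.ξ i)) := by
    intro a ha
    rw [LinearMap.mem_ker, LinearMap.add_apply, LinearMap.comp_apply, LinearMap.comp_apply,
      apply_hit, apply_hit,
      c.ξ_Fp_two _ (D.coh_mem_Fp 3 2 1 rfl _ (fun _ h => c.ξ_Fp_two i h) a ha),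
      c.ξ_Fp_two _ (D.coh_mem_Fp 3 2 1 rfl _ (fun _ h => c.ξ_Fp_two j h) a ha), add_zero]
  have hw : ∀ l y, y ∈ D.Fp 1 →
      c.w l * y ∈ LinearMap.ker (c.ξ i ∘ₗ H.hit (c.ξ j) + c.ξ j ∘ₗ H.hit (c.ξ i)) := by
    intro l y hy
    have hc : ∀ p q, c.ξ p (H.coh (c.ξ q) (c.w l * y)) =
        (if q = l then (1 : k) else 0) * c.ξ p y - (if p = l then (1 : k) else 0) * c.ξ q y := by
      intro p q
      have := c.ξ_Fp_two p (c.coh_w_mul l q 1 hy)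
      rw [map_sub, sub_eq_zero] at this
      rw [this, map_sub, map_smul, c.ξ_mul p (c.w_F l), counit_coh, c.ξ_w, smul_eq_mul]
      ring
    rw [LinearMap.mem_ker, LinearMap.add_apply, LinearMap.comp_apply, LinearMap.comp_apply,
      apply_hit, apply_hit, hc, hc]
    ring
  refine fun a ha => (D.Fp_succ_le.2 fun x hx b hb => ?_ : D.Fp 2 ≤ _) ha
  have : Submodule.span k (Set.range c.w) * ⊤ ⊔ D.Fp 2 ≤
      (LinearMap.ker (c.ξ i ∘ₗ H.hit (c.ξ j) + c.ξ j ∘ₗ H.hit (c.ξ i))).comap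
        (LinearMap.mulRight k b) := by
    refine sup_le (Submodule.mul_le.2 fun u hu d _ => ?_) fun f hf => ?_
    · rw [Submodule.mem_comap, LinearMap.mulRight_apply, mul_assoc]
      have hs : Submodule.span k (Set.range c.w) ≤
          (LinearMap.ker (c.ξ i ∘ₗ H.hit (c.ξ j) + c.ξ j ∘ₗ H.hit (c.ξ i))).comap
            (LinearMap.mulRight k (d * b)) := by
        refine Submodule.span_le.2 ?_
        rintro _ ⟨l, rfl⟩
        exact hw l _ (D.mul_mem_Fp_left hb d)
      exact hs hu
    · exact h3 (D.mul_mem_Fp hf hb)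
  exact this (c.gen (D.X_le_F hx))

lemma hit_ξ_anticomm {v : H.carrier} (hv : v ∈ D.fix) (i j : c.I) :
    H.hit (c.ξ i) (H.hit (c.ξ j) v) = -H.hit (c.ξ j) (H.hit (c.ξ i) v) := by
  have h := c.hit_eq_sum hv (c.anticomm_mem_chain i j)
  rw [hit_add, ← hit_hit, ← hit_hit, Finset.sum_eq_zero] at h
  · exact eq_neg_of_add_eq_zero_left h
  · intro l _
    rw [LinearMap.add_apply, LinearMap.comp_apply, LinearMap.comp_apply, apply_hit, apply_hit,
      c.ξ_coh_odd _ _ (c.w_odd l), c.ξ_coh_odd _ _ (c.w_odd l), add_zero, zero_smul]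

/-- The actions of functionals vanishing on `k·1 + F²` anticommute on a vector of `fix` whose images
under them are again in `fix`. -/
lemma hit_anticomm (c : D.Coords) {v : H.carrier} (hv : v ∈ D.fix) {α β : H.carrier →ₗ[k] k}
    (hα : α ∈ D.chain 0) (hβ : β ∈ D.chain 0) (hαv : H.hit α v ∈ D.fix)
    (hβv : H.hit β v ∈ D.fix) : H.hit α (H.hit β v) = -H.hit β (H.hit α v) := by
  rw [c.hit_eq_sum hβv hα, c.hit_eq_sum hαv hβ, c.hit_eq_sum hv hα, c.hit_eq_sum hv hβ]
  simp only [map_sum, map_smul, Finset.smul_sum, smul_smul]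
  rw [Finset.sum_comm, ← Finset.sum_neg_distrib]
  refine Finset.sum_congr rfl fun i _ => ?_
  rw [← Finset.sum_neg_distrib]
  refine Finset.sum_congr rfl fun j _ => ?_
  rw [c.hit_ξ_anticomm hv, smul_neg, mul_comm]

/-- A vector of `fix` killed by all `ξ i` is a multiple of `1`. -/
lemma eq_smul_one {v : H.carrier} (hv : v ∈ D.fix) (h : ∀ i, H.hit (c.ξ i) v = 0) :
    v = H.counit v • 1 := by
  have key : ∀ r ψ, H.coh ψ v - ψ v • 1 ∈ D.Fp (r + 1) := by
    intro r
    induction r with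
    | zero => exact D.coh_sub_mem_F hv
    | succ r ih =>
      intro ψ
      refine c.mem_Fp_succ (by omega) (ih ψ) fun j => ?_
      have := ih (ψ ∘ₗ H.hit (c.ξ j))
      rw [LinearMap.comp_apply, h, map_zero, zero_smul, sub_zero, comp_hit, ← coh_coh] at this
      rwa [map_sub, map_smul, coh_one, c.ξ_one, zero_smul, smul_zero, sub_zero]
  obtain ⟨m, hm⟩ := D.exists_Fp_eq_bot
  have := D.Fp_anti_succ m (key m H.counit)
  rw [hm, Submodule.mem_bot, coh_counit, sub_eq_zero] at this
  exact this

end Coords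

/-- The vectors of `V` in `fix` killed by the `j`-th member of the chain. -/
def level (D : OddDatum H) (V : Submodule k H.carrier) (j : ℕ) : Submodule k H.carrier :=
  V ⊓ D.fix ⊓ ⨅ α ∈ D.chain j, LinearMap.ker (H.hit α)

lemma mem_level {V : Submodule k H.carrier} {j : ℕ} {v : H.carrier} :
    v ∈ D.level V j ↔ (v ∈ V ∧ v ∈ D.fix) ∧ ∀ α ∈ D.chain j, H.hit α v = 0 := by
  simp [level, Submodule.mem_iInf]

lemma exists_mem_fix {V : Submodule k H.carrier} (hV : H.HitStable V) (n : ℕ) :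
    ∀ v ∈ V, v ∈ H.nil D.NF n → v ≠ 0 → ∃ u ∈ V, u ∈ D.fix ∧ u ≠ 0 := by
  induction n with
  | zero => exact fun v _ h h0 => absurd (by simpa [nil] using h) h0
  | succ n ih =>
    intro v hv hn h0
    by_cases hz : ∀ ν ∈ D.NF, H.hit ν v = 0
    · exact ⟨v, hv, mem_fix.2 hz, h0⟩
    · push Not at hz
      obtain ⟨ν, hν, hne⟩ := hz
      exact ih _ (hV ν v hv) (H.mem_nil_succ.1 hn ν hν) hne

lemma hit_chain_mem_nil {V : Submodule k H.carrier} (hV : H.HitStable V) {n : ℕ}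
    (hn : V ≤ H.nil D.NF n) (j : ℕ) :
    ∀ α ∈ D.chain j, ∀ v ∈ V, H.hit α v ∈ H.nil D.NF (n - j) := by
  induction j with
  | zero => exact fun α _ v hv => hn (hV α v hv)
  | succ j ih =>
    rintro _ ⟨ν, hν, α, hα, rfl⟩ v hv
    rw [← hit_hit]
    have := ih α hα v hv
    obtain h | ⟨m, hm⟩ : n - j = 0 ∨ ∃ m, n - j = m + 1 := by
      rcases hh : n - j with _ | m
      · exact Or.inl rfl
      · exact Or.inr ⟨m, rfl⟩
    · rw [h] at this
      rw [show H.hit α v = 0 by simpa [nil] using this, map_zero]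
      exact zero_mem _
    · rw [hm, mem_nil_succ] at this
      rw [show n - (j + 1) = m by omega]
      exact this ν hν

/-- Descent along the chain: the members of the `j`-th set act on `level V (j + 1)` as
anticommuting operators of square zero, so they have a common kernel vector. -/
lemma level_ne_bot_of_succ (c : D.Coords) {V : Submodule k H.carrier} [FiniteDimensional k V]
    (hV : H.HitStable V) {j : ℕ} (h : D.level V (j + 1) ≠ ⊥) : D.level V j ≠ ⊥ := by
  have hmaps : ∀ γ ∈ D.chain j, ∀ v ∈ D.level V (j + 1), H.hit γ v ∈ D.level V (j + 1) := by
    intro γ hγ v hv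
    obtain ⟨⟨h1, h2⟩, h3⟩ := mem_level.1 hv
    have hfix : H.hit γ v ∈ D.fix := mem_fix.2 fun ν hν => by
      rw [hit_hit]; exact h3 _ ⟨ν, hν, γ, hγ, rfl⟩
    refine mem_level.2 ⟨⟨hV γ v h1, hfix⟩, fun δ hδ => ?_⟩
    rw [c.hit_anticomm h2 (D.chain_le _ hδ) (D.chain_le _ hγ) (by rw [h3 δ hδ]; exact zero_mem _)
      hfix, h3 δ hδ, map_zero, neg_zero]
  have hfd : FiniteDimensional k (D.level V (j + 1)) :=
    Submodule.finiteDimensional_of_le (S₂ := V) fun v hv => (mem_level.1 hv).1.1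
  obtain ⟨W, hW, ⟨hW0, hWs⟩, hmin⟩ := exists_minimal_submodule
    (fun W => W ≠ ⊥ ∧ ∀ γ ∈ D.chain j, ∀ v ∈ W, H.hit γ v ∈ W) _ ⟨h, hmaps⟩
  have hanti : ∀ γ ∈ D.chain j, ∀ γ' ∈ D.chain j, ∀ v ∈ W,
      H.hit γ (H.hit γ' v) = -H.hit γ' (H.hit γ v) := fun γ hγ γ' hγ' v hv =>
    c.hit_anticomm (mem_level.1 (hW hv)).1.2 (D.chain_le _ hγ) (D.chain_le _ hγ')
      (mem_level.1 (hW (hWs γ hγ v hv))).1.2 (mem_level.1 (hW (hWs γ' hγ' v hv))).1.2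
  have hkill : ∀ γ ∈ D.chain j, ∀ v ∈ W, H.hit γ v = 0 := by
    intro γ hγ
    have hne : W ⊓ LinearMap.ker (H.hit γ) ≠ ⊥ := by
      obtain ⟨w, hw, hw0⟩ := (Submodule.ne_bot_iff W).1 hW0
      by_cases hz : H.hit γ w = 0
      · exact (Submodule.ne_bot_iff _).2 ⟨w, ⟨hw, hz⟩, hw0⟩
      · refine (Submodule.ne_bot_iff _).2 ⟨_, ⟨hWs γ hγ w hw, ?_⟩, hz⟩
        have h1 := hanti γ hγ γ hγ w hw
        rw [eq_neg_iff_add_eq_zero, ← two_smul k] at h1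
        exact (smul_eq_zero.1 h1).resolve_left D.two
    have := hmin _ inf_le_left ⟨hne, fun γ' hγ' v hv => ⟨hWs γ' hγ' v hv.1, ?_⟩⟩
    · intro v hv
      rw [← this] at hv
      exact hv.2
    · have h0 : H.hit γ v = 0 := hv.2
      change H.hit γ (H.hit γ' v) = 0
      rw [hanti γ hγ γ' hγ' v hv.1, h0, map_zero, neg_zero]
  obtain ⟨w, hw, hw0⟩ := (Submodule.ne_bot_iff W).1 hW0
  exact (Submodule.ne_bot_iff _).2
    ⟨w, mem_level.2 ⟨(mem_level.1 (hW hw)).1, fun γ hγ => hkill γ hγ w hw⟩, hw0⟩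

/-- A nonzero finite-dimensional right coideal on which the functionals vanishing on `k·1 + F` act
nilpotently contains `1`. -/
theorem one_mem (D : OddDatum H) {V : Submodule k H.carrier} [FiniteDimensional k V]
    (hV : H.HitStable V) (h0 : V ≠ ⊥) {n : ℕ} (hn : V ≤ H.nil D.NF n) :
    (1 : H.carrier) ∈ V := by
  obtain ⟨c⟩ := D.exists_coords
  obtain ⟨v, hv, hv0⟩ := (Submodule.ne_bot_iff V).1 h0
  obtain ⟨u, hu, huf, hu0⟩ := exists_mem_fix hV n v hv (hn hv) hv0
  have htop : D.level V n ≠ ⊥ := by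
    refine (Submodule.ne_bot_iff _).2 ⟨u, mem_level.2 ⟨⟨hu, huf⟩, fun α hα => ?_⟩, hu0⟩
    have := hit_chain_mem_nil hV hn n α hα u hu
    simpa [nil] using this
  have hall : ∀ j, D.level V j ≠ ⊥ → D.level V 0 ≠ ⊥ := by
    intro j
    induction j with
    | zero => exact id
    | succ j ih => exact fun h => ih (level_ne_bot_of_succ c hV h)
  obtain ⟨w, hw, hw0⟩ := (Submodule.ne_bot_iff _).1 (hall n htop)
  obtain ⟨⟨h1, h2⟩, h3⟩ := mem_level.1 hw
  have h4 := c.eq_smul_one h2 fun i => h3 _ ⟨c.ξ_one i, fun a ha => c.ξ_Fp_two i ha⟩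
  have h5 : H.counit w ≠ 0 := fun h => hw0 (by rw [h4, h, zero_smul])
  rw [h4] at h1
  exact (Submodule.smul_mem_iff V h5).1 h1

end OddDatum

end HopfSuperalgebra

namespace HopfSuperalgebra

variable {k : Type} [Field k] (H : HopfSuperalgebra k)

/-! ### Reduction to finitely many odd generators -/

lemma comul_pe (a : H.carrier) : H.comul (H.pe a) =
    TensorProduct.map H.pe H.pe (H.comul a) + TensorProduct.map H.po H.po (H.comul a) := by
  have h1 : ∀ t : H.carrier ⊗[k] H.carrier,
      TensorProduct.map H.pe H.pe (TensorProduct.map H.pe H.po t + TensorProduct.map H.po H.pe t) +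
      TensorProduct.map H.po H.po (TensorProduct.map H.pe H.po t + TensorProduct.map H.po H.pe t) =
        0 := by
    intro t
    induction t with
    | zero => simp
    | add x y hx hy =>
      simp only [map_add] at hx hy ⊢
      have := congrArg₂ (· + ·) hx hy
      simp only [add_zero] at this
      rw [← this]; abel
    | tmul x y => simp
  have h2 := h1 (H.comul (H.po a))
  rw [← H.comul_odd _ (H.pe_po a)] at h2
  conv_rhs => rw [← H.pe_add_po a]
  rw [map_add, map_add, map_add, add_add_add_comm, h2, add_zero]
  exact H.comul_even _ (H.po_pe a)

lemma hit_pe (β : H.carrier →ₗ[k] k) (a : H.carrier) :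
    H.hit β (H.pe a) = H.pe (H.hit (β ∘ₗ H.pe) a) + H.po (H.hit (β ∘ₗ H.po) a) := by
  simp only [hit, LinearMap.comp_apply, comul_pe]
  induction H.comul a with
  | zero => simp
  | add x y hx hy =>
    simp only [map_add] at hx hy ⊢
    rw [add_add_add_comm, hx, hy]; abel
  | tmul x y => simp

lemma coh_pe (β : H.carrier →ₗ[k] k) (a : H.carrier) :
    H.coh β (H.pe a) = H.pe (H.coh (β ∘ₗ H.pe) a) + H.po (H.coh (β ∘ₗ H.po) a) := by
  simp only [coh, LinearMap.comp_apply, comul_pe]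
  induction H.comul a with
  | zero => simp
  | add x y hx hy =>
    simp only [map_add] at hx hy ⊢
    rw [add_add_add_comm, hx, hy]; abel
  | tmul x y => simp

/-- Finitely many odd elements lie in a finite-dimensional graded subcoalgebra. -/
lemma exists_oddDatum (hc : H.IsSuperCommutative) (h2 : (2 : k) ≠ 0) (s : Finset H.carrier)
    (hs : ∀ x ∈ s, H.pe x = 0) : ∃ D : H.OddDatum, ∀ x ∈ s, x ∈ D.X := by
  set V : Submodule k H.carrier := ⨆ x : s, H.hitSpan (x : H.carrier) with hV
  have hVs : H.HitStable V := by
    intro β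
    have : V ≤ V.comap (H.hit β) := iSup_le fun x v hv =>
      (le_iSup (fun x : s => H.hitSpan (x : H.carrier)) x) (H.hitStable_hitSpan _ β v hv)
    exact this
  have hVfd : FiniteDimensional k V := Submodule.finite_iSup _
  set W := H.cohHull V with hW
  have hWh : H.HitStable W := H.hitStable_cohHull hVs
  have hWc : H.CohStable W := H.cohStable_cohHull V
  set C := W.map H.pe ⊔ W.map H.po with hC
  have hWC : W ≤ C := fun w hw => by
    rw [← H.pe_add_po w]
    exact Submodule.add_mem_sup (Submodule.mem_map_of_mem hw) (Submodule.mem_map_of_mem hw)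
  have hpe : ∀ w ∈ W, H.pe w ∈ C := fun w hw =>
    Submodule.mem_sup_left (Submodule.mem_map_of_mem hw)
  have hpo : ∀ w ∈ W, H.po w ∈ C := fun w hw =>
    Submodule.mem_sup_right (Submodule.mem_map_of_mem hw)
  have hle : ∀ f : H.carrier →ₗ[k] H.carrier, (∀ w ∈ W, f (H.pe w) ∈ C) → (∀ w ∈ W, f w ∈ C) →
      C ≤ C.comap f := by
    intro f h1 h2
    refine sup_le (Submodule.map_le_iff_le_comap.2 fun w hw => h1 w hw)
      (Submodule.map_le_iff_le_comap.2 fun w hw => ?_)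
    rw [Submodule.mem_comap, Submodule.mem_comap, po_eq, map_sub]
    exact sub_mem (h2 w hw) (h1 w hw)
  refine ⟨⟨C, inferInstance, fun β => ?_, fun β => ?_, ?_, hc, h2⟩, fun x hx => ⟨hWC ?_, hs x hx⟩⟩
  · refine hle _ (fun w hw => ?_) fun w hw => hWC (hWh β w hw)
    rw [hit_pe]
    exact add_mem (hpe _ (hWh _ w hw)) (hpo _ (hWh _ w hw))
  · refine hle _ (fun w hw => ?_) fun w hw => hWC (hWc β w hw)
    rw [coh_pe]
    exact add_mem (hpe _ (hWc _ w hw)) (hpo _ (hWc _ w hw))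
  · exact hle _ (fun w hw => by rw [pe_pe]; exact hpe w hw) hpe
  · exact H.le_cohHull V (le_iSup (fun x : s => H.hitSpan (x : H.carrier)) ⟨x, hx⟩
      (H.mem_hitSpan x))

lemma exists_finset_odd (x : H.carrier)
    (hx : x ∈ Submodule.span k {x : H.carrier | ∃ a b, H.pe b = 0 ∧ x = a * b}) :
    ∃ s : Finset H.carrier, (∀ y ∈ s, H.pe y = 0) ∧
      x ∈ (⊤ : Submodule k H.carrier) * Submodule.span k (s : Set H.carrier) := by
  classical
  induction hx using Submodule.span_induction with
  | mem x hx =>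
    obtain ⟨a, b, hb, rfl⟩ := hx
    exact ⟨{b}, by simpa using hb,
      Submodule.mul_mem_mul Submodule.mem_top (Submodule.subset_span (by simp))⟩
  | zero => exact ⟨∅, by simp, zero_mem _⟩
  | add x y _ _ hx hy =>
    obtain ⟨s, hs, hxs⟩ := hx
    obtain ⟨t, ht, hyt⟩ := hy
    refine ⟨s ∪ t, fun z hz => (Finset.mem_union.1 hz).elim (hs z) (ht z), add_mem ?_ ?_⟩
    · exact (mul_le_mul' le_rfl (Submodule.span_mono (by simp)) :
        (⊤ : Submodule k H.carrier) * _ ≤ ⊤ * _) hxs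
    · exact (mul_le_mul' le_rfl (Submodule.span_mono (by simp)) :
        (⊤ : Submodule k H.carrier) * _ ≤ ⊤ * _) hyt
  | smul c x _ hx =>
    obtain ⟨s, hs, hxs⟩ := hx
    exact ⟨s, hs, Submodule.smul_mem _ _ hxs⟩

lemma exists_finset_odd_of_fd (J : Submodule k H.carrier) [hfd : FiniteDimensional k J]
    (hJ : J ≤ Submodule.span k {x : H.carrier | ∃ a b, H.pe b = 0 ∧ x = a * b}) :
    ∃ s : Finset H.carrier, (∀ y ∈ s, H.pe y = 0) ∧
      J ≤ (⊤ : Submodule k H.carrier) * Submodule.span k (s : Set H.carrier) := by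
  classical
  obtain ⟨t, rfl⟩ := (Module.Finite.iff_fg.1 hfd : J.FG)
  choose! f hf hf' using H.exists_finset_odd
  have ht : ∀ x ∈ t, x ∈ Submodule.span k {x : H.carrier | ∃ a b, H.pe b = 0 ∧ x = a * b} :=
    fun x hx => hJ (Submodule.subset_span hx)
  refine ⟨t.biUnion f, fun y hy => ?_, Submodule.span_le.2 fun x hx => ?_⟩
  · obtain ⟨x, hx, hy⟩ := Finset.mem_biUnion.1 hy
    exact hf x (ht x hx) y hy
  · refine (mul_le_mul' le_rfl (Submodule.span_mono ?_) :
      (⊤ : Submodule k H.carrier) * _ ≤ ⊤ * _) (hf' x (ht x hx))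
    exact Finset.coe_subset.2 (Finset.subset_biUnion_of_mem f hx)

section Quotient

variable {H} {B : HopfSuperalgebra k} (π : HopfSuperalgebra.Hom H B)

/-- The functionals with `ν 1 = 0` which factor through `π`. -/
def NI : Set (H.carrier →ₗ[k] k) := {ν | ν 1 = 0 ∧ ∃ g : B.carrier →ₗ[k] k, ν = g ∘ₗ π.toLinearMap}

lemma mem_nil_NI (n : ℕ) (a : H.carrier)
    (h : ∀ ψ, π.toLinearMap (H.coh ψ a) ∈ B.nil B.aug n) : a ∈ H.nil (NI π) n := by
  induction n generalizing a with
  | zero =>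
    rw [nil, Submodule.mem_bot]
    refine dual_ext (k := k) fun ψ => ?_
    have h1 : π.toLinearMap (H.coh ψ a) = 0 := by simpa [nil] using h ψ
    rw [← H.counit_coh ψ a, ← π.map_counit', h1, map_zero, map_zero]
  | succ n ih =>
    refine H.mem_nil_succ.2 ?_
    rintro _ ⟨h1, g, rfl⟩
    refine ih _ fun ψ => ?_
    rw [← hit_coh, ← Hom.hit_map]
    refine B.mem_nil_succ.1 (h ψ) g ?_
    rw [LinearMap.comp_apply, π.map_one'] at h1
    exact h1

lemma exists_mem_nil_NI (hB : B.Conil) (a : H.carrier) : ∃ n, a ∈ H.nil (NI π) n := by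
  obtain ⟨n, hn⟩ := B.fd_le_nil B.aug ((H.cohSpan a).map π.toLinearMap) fun w _ => hB w
  exact ⟨n, mem_nil_NI π n a fun ψ => hn (Submodule.mem_map_of_mem ⟨ψ, rfl⟩)⟩

/-- If the quotient by the ideal generated by the odd elements is conilpotent, then every nonzero
subcoalgebra contains `1`. -/
lemma one_mem_of_conil (hc : H.IsSuperCommutative) (h2 : (2 : k) ≠ 0)
    (hker : LinearMap.ker π.toLinearMap =
      Submodule.span k {x : H.carrier | ∃ a b, H.pe b = 0 ∧ x = a * b})
    (hB : B.Conil) (S : Submodule k H.carrier) (hS : IsSubcoalgebraOf H.comul S) (h0 : S ≠ ⊥) :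
    (1 : H.carrier) ∈ S := by
  obtain ⟨d, hd, hd0⟩ := (Submodule.ne_bot_iff S).1 h0
  have hVS : H.hitSpan d ≤ S := by
    rintro _ ⟨β, rfl⟩
    exact ((H.isSubcoalgebraOf_iff S).1 hS).1 β d hd
  obtain ⟨n, hn⟩ := H.fd_le_nil (NI π) (H.hitSpan d) fun w _ => exists_mem_nil_NI π hB w
  -- On `V = hitSpan d` the action of a functional only depends on its restriction to `Q`.
  set Q : Submodule k H.carrier := H.cohHull (H.hitSpan d) ⊔ (k ∙ (1 : H.carrier)) with hQ
  have hfd : FiniteDimensional k (Q ⊓ LinearMap.ker π.toLinearMap : Submodule k H.carrier) :=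
    Submodule.finiteDimensional_of_le (S₂ := Q) inf_le_left
  obtain ⟨s, hs, hsJ⟩ := H.exists_finset_odd_of_fd (Q ⊓ LinearMap.ker π.toLinearMap)
    (hker ▸ inf_le_right)
  obtain ⟨D, hD⟩ := H.exists_oddDatum hc h2 s hs
  have hJF : ∀ x ∈ Q, π.toLinearMap x = 0 → x ∈ D.Fp 1 := by
    intro x hx hx0
    have h1 : (⊤ : Submodule k H.carrier) * Submodule.span k (s : Set H.carrier) ≤ D.Fp 1 :=
      Submodule.mul_le.2 fun a _ b hb =>
        D.mul_mem_Fp_left (D.X_le_F (Submodule.span_le.2 (fun y hy => hD y hy) hb)) a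
    exact h1 (hsJ ⟨hx, hx0⟩)
  have hext : ∀ ν ∈ D.NF, ∃ β ∈ NI π, ∀ v ∈ H.hitSpan d, H.hit ν v = H.hit β v := by
    rintro ν ⟨h1, hF⟩
    have hmem : ν ∘ₗ Q.subtype ∈ LinearMap.range (π.toLinearMap ∘ₗ Q.subtype).dualMap := by
      rw [LinearMap.range_dualMap_eq_dualAnnihilator_ker, Submodule.mem_dualAnnihilator]
      exact fun x hx => hF _ (hJF x x.2 hx)
    obtain ⟨g, hg⟩ := hmem
    have hg' : ∀ x ∈ Q, g (π.toLinearMap x) = ν x := fun x hx => LinearMap.congr_fun hg ⟨x, hx⟩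
    refine ⟨g ∘ₗ π.toLinearMap, ⟨?_, g, rfl⟩, fun v hv => dual_ext (k := k) fun ψ => ?_⟩
    · rw [LinearMap.comp_apply, hg' 1 (Submodule.mem_sup_right
        (Submodule.mem_span_singleton_self _)), h1]
    · rw [apply_hit, apply_hit, LinearMap.comp_apply, hg' _ (Submodule.mem_sup_left
        (H.cohStable_cohHull _ ψ v (H.le_cohHull _ hv)))]
  have hnil : ∀ m, ∀ v ∈ H.hitSpan d, v ∈ H.nil (NI π) m → v ∈ H.nil D.NF m := by
    intro m
    induction m with
    | zero => exact fun v _ h => h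
    | succ m ih =>
      intro v hv hm
      refine H.mem_nil_succ.2 fun ν hν => ih _ (H.hitStable_hitSpan d ν v hv) ?_
      obtain ⟨β, hβ, he⟩ := hext ν hν
      rw [he v hv]
      exact H.mem_nil_succ.1 hm β hβ
  refine hVS (D.one_mem (H.hitStable_hitSpan d) ?_ fun v hv => hnil n v hv (hn hv))
  exact (Submodule.ne_bot_iff _).2 ⟨d, H.mem_hitSpan d, hd0⟩

end Quotient

end HopfSuperalgebra

/-- Theorem 6.3, A. Zubkov: an affine supergroup scheme
`G = SSp A` is unipotent if and only if the associated affine group scheme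
`G_res = Sp Ā` is unipotent; i.e. the super-commutative Hopf superalgebra `A`
is irreducible iff its largest purely even quotient Hopf algebra `Ā = A/A·A₁`
is irreducible.  Here `B`, equipped with the surjection `π` with kernel `A·A₁`,
is a realization of `Ā`. -/
theorem unipotent_iff_res_unipotent
    (k : Type) [Field k] (hchar : ringChar k ≠ 2)
    (A B : HopfSuperalgebra k)
    (hA : A.IsSuperCommutative) (hB : B.IsPurelyEven)
    (π : HopfSuperalgebra.Hom A B)
    (hsurj : Function.Surjective π.toLinearMap)
    (hker : LinearMap.ker π.toLinearMap =
      Submodule.span k {x : A.carrier | ∃ a b, A.pe b = 0 ∧ x = a * b}) :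
    A.IsIrreducible ↔ B.IsIrreducible := by
  constructor
  · intro h
    exact (B.isIrreducible_iff_conil).2 (HopfSuperalgebra.Hom.conil π hsurj
      ((A.isIrreducible_iff_conil).1 h))
  · intro h
    exact A.isIrreducible_of_one_mem (HopfSuperalgebra.one_mem_of_conil π hA
      (Ring.two_ne_zero hchar) hker ((B.isIrreducible_iff_conil).1 h))

end
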